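/- arXiv:1308.0881 — 2 statements merged into one kernel-verified Lean document; each statement's English description precedes it below -/
import Mathlib

section
/- Let μ ∈ (1/2, ∞). For n ∈ ℤ set m₊ = (2+n)·μ and m₋ = (2−n)·μ, and define for φ ∈ C_c^∞(ℝ) the operators Q†φ(p) = −d/dp((p−n)·φ(p)), P†φ(p) = −d/dp(p·φ(p)), and A_nφ := P†( (Q† + m₊)( (Q† + m₋) φ ) ) − (2μ−1)·( Q†φ − P†φ ), where (Q† + m)φ := Q†φ + m·φ. Then there exist N₀ ∈ ℕ and a constant C < ∞, depending only on μ, such that for every n ∈ ℤ with n = 0 or |n| ≥ N₀, and every finite complex Borel measure f = g·λ + c·δ₀ on ℝ with g ∈ L¹(ℝ; ℂ) and c ∈ ℂ, there exists a finite complex Borel measure u = h·λ + d·δ₀ with h ∈ L¹(ℝ; ℂ) and d ∈ ℂ, whose total variation norm satisfies ‖u‖ ≤ C·(1+n²)^{−1}·‖f‖, such that ∫_ℝ A_nφ du = ∫_ℝ φ df for all φ ∈ C_c^∞(ℝ). -/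
open MeasureTheory

/-- Formal adjoint `Q†φ(p) = −d/dp((p−n)·φ(p))` of `Q = (p−n)∂_p`. -/
noncomputable def Qdag (n : ℝ) (φ : ℝ → ℝ) : ℝ → ℝ :=
  fun p => -deriv (fun q => (q - n) * φ q) p

/-- Formal adjoint `P†φ(p) = −d/dp(p·φ(p))` of `P = p∂_p`. -/
noncomputable def Pdag (φ : ℝ → ℝ) : ℝ → ℝ :=
  fun p => -deriv (fun q => q * φ q) p

/-- The formal adjoint `A_n = P†(Q† + m₊)(Q† + m₋) − (2μ−1)(Q† − P†)` of the linearized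
spiral operator `L_n = (Q + m₋)(Q + m₊)P − (2μ−1)(Q − P)`, where `m₊ = (2+n)μ`,
`m₋ = (2−n)μ`. -/
noncomputable def Aop (μ : ℝ) (n : ℤ) (φ : ℝ → ℝ) : ℝ → ℝ :=
  fun p =>
    Pdag (fun q => Qdag (n : ℝ) (fun q' => Qdag (n : ℝ) φ q' + (2 - (n : ℝ)) * μ * φ q') q
        + (2 + (n : ℝ)) * μ * (Qdag (n : ℝ) φ q + (2 - (n : ℝ)) * μ * φ q)) p
      - (2 * μ - 1) * (Qdag (n : ℝ) φ p - Pdag φ p)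

/-!
On `L¹` the resolvent `(Q + m)⁻¹` is an integral operator with an explicit power-law kernel, of norm
`|m - 1|⁻¹`, and so is `P⁻¹`, of norm `1`. Since `Q - P = -n ∂_p`, the substitution `u = P⁻¹ w` and
the inversion of both resolvents turn `L_n u = f` into
`w - (2μ-1) (Q + m₊)⁻¹ Z w = (Q + m₊)⁻¹ (Q + m₋)⁻¹ f` with `Z = (Q + m₋)⁻¹ (Q - P) P⁻¹`.

Although `Q - P` costs a derivative and a factor `n`, `Z` is bounded by `2` uniformly in `n`: as
`∂_p P⁻¹ δ_s = (δ_s - δ₀) / s`, its kernel is a difference quotient of the kernel of `(Q + m₋)⁻¹`,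
whose sections depend on `s` in a Lipschitz way in `L¹`, with constant `2 / |n|` at `s = 0`. Since
`|m± - 1|` grows like `|n|`, the equation for `w` is solved by a Neumann series, and the two
resolvents on the right provide the factor `n⁻²`. The multiple of `δ₀` in `f` is turned into an `L¹`
density by `(Q + m₋)⁻¹`, since `0` is not the critical point `n` of `Q`. For `n = 0` the operator is
`P (Q + 2μ) (Q + 2μ)`, of which `δ₀` is an eigenmeasure with eigenvalue `-(2μ-1)²`.
-/

open Set Filter Topology

section Neumann

variable {𝕜 V : Type*} [NontriviallyNormedField 𝕜] [NormedAddCommGroup V] [NormedSpace 𝕜 V]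
  [CompleteSpace V]

lemma exists_sub_apply_eq (T : V →L[𝕜] V) (hT : ‖T‖ < 1) (v : V) :
    ∃ w : V, w - T w = v ∧ ‖w‖ ≤ (1 - ‖T‖)⁻¹ * ‖v‖ := by
  set w := (↑(Units.oneSub T hT)⁻¹ : V →L[𝕜] V) v
  have hwv : w - T w = v := by
    have := congrArg (· v) (Units.oneSub T hT).mul_inv
    simpa using this
  refine ⟨w, hwv, ?_⟩
  have hnorm : ‖w‖ ≤ ‖v‖ + ‖T‖ * ‖w‖ :=
    calc ‖w‖ = ‖v + T w‖ := by rw [← hwv, sub_add_cancel]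
      _ ≤ ‖v‖ + ‖T‖ * ‖w‖ := (norm_add_le _ _).trans (by gcongr; exact T.le_opNorm w)
  rw [inv_mul_eq_div, le_div_iff₀ (by linarith)]
  linarith

end Neumann

section KernelOperator

variable {X Y E : Type*} [MeasurableSpace X] [MeasurableSpace Y] [NormedAddCommGroup E]
  [NormedSpace ℝ E] {μ : Measure X} {ν : Measure Y} {k : X → Y → ℝ} {M : ℝ}

/-- The condition of the Schur test for `L¹`: the sections `k(·, y)` of the measurable kernel `k`
have `L¹` norm at most `M`, so that `g ↦ ∫ k(·, y) g(y) dν(y)` maps `L¹(ν)` to `L¹(μ)`. -/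
structure IsL1Kernel (μ : Measure X) (ν : Measure Y) (k : X → Y → ℝ) (M : ℝ) : Prop where
  aestronglyMeasurable : AEStronglyMeasurable (Function.uncurry k) (μ.prod ν)
  integrable : ∀ᵐ y ∂ν, Integrable (fun x => k x y) μ
  integral_norm_le : ∀ᵐ y ∂ν, ∫ x, ‖k x y‖ ∂μ ≤ M

namespace IsL1Kernel

variable [SFinite μ] [SFinite ν]

lemma integrable_prod (hk : IsL1Kernel μ ν k M) {g : Y → E} (hg : Integrable g ν) :
    Integrable (fun z : X × Y => k z.1 z.2 • g z.2) (μ.prod ν) := by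
  have hmeas : AEStronglyMeasurable (fun z : X × Y => k z.1 z.2 • g z.2) (μ.prod ν) :=
    hk.aestronglyMeasurable.smul hg.1.comp_snd
  rw [integrable_prod_iff' hmeas]
  constructor
  · filter_upwards [hk.integrable] with y hy using hy.smul_const _
  · refine (hg.norm.const_mul M).mono' hmeas.norm.prod_swap.integral_prod_right' ?_
    filter_upwards [hk.integral_norm_le] with y hy
    simp only [norm_smul, integral_mul_const, norm_mul, norm_norm]
    gcongr
    rwa [Real.norm_of_nonneg (integral_nonneg fun _ => norm_nonneg _)]

lemma integral_norm_integral_le (hk : IsL1Kernel μ ν k M) {g : Y → E} (hg : Integrable g ν) :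
    ∫ x, ‖∫ y, k x y • g y ∂ν‖ ∂μ ≤ M * ∫ y, ‖g y‖ ∂ν := by
  have hprod := hk.integrable_prod hg
  calc ∫ x, ‖∫ y, k x y • g y ∂ν‖ ∂μ ≤ ∫ x, ∫ y, ‖k x y • g y‖ ∂ν ∂μ :=
        integral_mono hprod.integral_prod_left.norm hprod.norm.integral_prod_left
          fun x => norm_integral_le_integral_norm _
    _ = ∫ y, ∫ x, ‖k x y • g y‖ ∂μ ∂ν := integral_integral_swap hprod.norm
    _ ≤ ∫ y, M * ‖g y‖ ∂ν := by
        refine integral_mono_ae hprod.norm.integral_prod_right (hg.norm.const_mul M) ?_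
        filter_upwards [hk.integral_norm_le] with y hy
        simp only [norm_smul, integral_mul_const]
        gcongr
    _ = M * ∫ y, ‖g y‖ ∂ν := integral_const_mul _ _

/-- The integral operator `g ↦ ∫ k(·, y) g(y) dν(y)` from `L¹(ν)` to `L¹(μ)`. -/
noncomputable def op (hk : IsL1Kernel μ ν k M) : (Y →₁[ν] E) →L[ℝ] (X →₁[μ] E) :=
  LinearMap.mkContinuous
    { toFun := fun g => (hk.integrable_prod (L1.integrable_coeFn g)).integral_prod_left.toL1 _
      map_add' := fun g₁ g₂ => by
        rw [← Integrable.toL1_add, Integrable.toL1_eq_toL1_iff]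
        filter_upwards [(hk.integrable_prod (L1.integrable_coeFn g₁)).prod_right_ae,
          (hk.integrable_prod (L1.integrable_coeFn g₂)).prod_right_ae] with x h₁ h₂
        rw [Pi.add_apply, ← integral_add h₁ h₂]
        refine integral_congr_ae ?_
        filter_upwards [Lp.coeFn_add g₁ g₂] with y hy
        rw [hy, Pi.add_apply, smul_add]
      map_smul' := fun a g => by
        rw [RingHom.id_apply, ← Integrable.toL1_smul, Integrable.toL1_eq_toL1_iff]
        refine Eventually.of_forall fun x => ?_
        simp only
        rw [← integral_smul]
        refine integral_congr_ae ?_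
        filter_upwards [Lp.coeFn_smul a g] with y hy
        rw [hy, Pi.smul_apply, smul_comm] }
    M fun g => by
      simpa [L1.norm_of_fun_eq_integral_norm, L1.norm_eq_integral_norm g] using
        hk.integral_norm_integral_le (L1.integrable_coeFn g)

lemma coeFn_op (hk : IsL1Kernel μ ν k M) (g : Y →₁[ν] E) :
    hk.op g =ᵐ[μ] fun x => ∫ y, k x y • g y ∂ν :=
  (hk.integrable_prod (L1.integrable_coeFn g)).integral_prod_left.coeFn_toL1

lemma norm_op_le (hk : IsL1Kernel μ ν k M) (hM : 0 ≤ M) :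
    ‖(hk.op : (Y →₁[ν] E) →L[ℝ] (X →₁[μ] E))‖ ≤ M :=
  LinearMap.mkContinuous_norm_le _ hM _

lemma integral_smul_op [CompleteSpace E] (hk : IsL1Kernel μ ν k M) (g : Y →₁[ν] E) {ψ : X → ℝ}
    (hψ : AEStronglyMeasurable ψ μ) {C : ℝ} (hC : ∀ x, ‖ψ x‖ ≤ C) :
    ∫ x, ψ x • hk.op g x ∂μ = ∫ y, (∫ x, ψ x * k x y ∂μ) • g y ∂ν := by
  have hprod : Integrable (fun z : X × Y => ψ z.1 • k z.1 z.2 • g z.2) (μ.prod ν) :=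
    (hk.integrable_prod (L1.integrable_coeFn g)).bdd_smul C hψ.comp_fst
      (Eventually.of_forall fun z => hC z.1)
  calc ∫ x, ψ x • hk.op g x ∂μ = ∫ x, ∫ y, ψ x • k x y • g y ∂ν ∂μ := by
        refine integral_congr_ae ?_
        filter_upwards [hk.coeFn_op g] with x hx
        rw [hx, integral_smul]
    _ = ∫ y, ∫ x, ψ x • k x y • g y ∂μ ∂ν := integral_integral_swap hprod
    _ = ∫ y, (∫ x, ψ x * k x y ∂μ) • g y ∂ν := by
        simp only [smul_smul, integral_smul_const]

end IsL1Kernel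

end KernelOperator

section Dilation

/-- The `L¹`-normalized dilation `p ↦ |a|⁻¹ κ(p/a)`, that is, the density of the image of `κ·λ`
under multiplication by `a ≠ 0`. -/
noncomputable def dilate (κ : ℝ → ℝ) (a : ℝ) : ℝ → ℝ :=
  fun p => κ (p / a) / |a|

variable {κ : ℝ → ℝ} {a b : ℝ}

lemma norm_dilate (p : ℝ) : ‖dilate κ a p‖ = dilate (fun r => ‖κ r‖) a p := by
  simp [dilate]

lemma integral_dilate (κ : ℝ → ℝ) (ha : a ≠ 0) : ∫ p, dilate κ a p = ∫ r, κ r := by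
  simp only [dilate]
  rw [integral_div, Measure.integral_comp_div, smul_eq_mul,
    mul_div_cancel_left₀ _ (abs_ne_zero.2 ha)]

lemma integral_norm_dilate (κ : ℝ → ℝ) (ha : a ≠ 0) : ∫ p, ‖dilate κ a p‖ = ∫ r, ‖κ r‖ := by
  simp only [norm_dilate, integral_dilate _ ha]

lemma integrable_dilate (hκ : Integrable κ) (ha : a ≠ 0) : Integrable (dilate κ a) :=
  (hκ.comp_div ha).div_const _

lemma integral_mul_dilate (ψ κ : ℝ → ℝ) (ha : a ≠ 0) :
    ∫ p, ψ p * dilate κ a p = ∫ r, ψ (a * r) * κ r := by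
  rw [← integral_dilate (fun r => ψ (a * r) * κ r) ha]
  refine integral_congr_ae (Eventually.of_forall fun p => ?_)
  simp only [dilate, mul_div_cancel₀ p ha, mul_div_assoc]

lemma dilate_one (κ : ℝ → ℝ) : dilate κ 1 = κ := by
  ext p
  simp [dilate]

lemma integral_norm_dilate_sub_dilate (κ : ℝ → ℝ) (a : ℝ) (hb : b ≠ 0) :
    ∫ p, ‖dilate κ a p - dilate κ b p‖ = ∫ r, ‖dilate κ (a / b) r - κ r‖ := by
  rw [← integral_norm_dilate (fun r => dilate κ (a / b) r - κ r) hb]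
  refine integral_congr_ae (Eventually.of_forall fun p => ?_)
  simp only [dilate, sub_div, div_div_div_cancel_right₀ hb, div_div, abs_div,
    div_mul_cancel₀ _ (abs_ne_zero.2 hb)]

end Dilation

lemma ne_of_one_le_abs_sub {a b : ℝ} (hab : 1 ≤ |a - b|) : a ≠ b :=
  sub_ne_zero.1 (abs_pos.1 (one_pos.trans_le hab))

section EulerKernel

/-- The density of a solution of `(r ∂ᵣ + m) κ = δ₁`: of the two kernels `r⁻ᵐ 1_{r > 1}` and
`-r⁻ᵐ 1_{0 < r < 1}`, the one that is integrable. For `m = 1` neither is. -/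
noncomputable def eulerKernel (m : ℝ) : ℝ → ℝ :=
  if 1 < m then (Ioi 1).indicator fun r => r ^ (-m)
  else (Ioo 0 1).indicator fun r => -r ^ (-m)

variable {m : ℝ}

lemma eulerKernel_of_one_lt (hm : 1 < m) :
    eulerKernel m = (Ioi 1).indicator fun r => r ^ (-m) :=
  if_pos hm

lemma eulerKernel_of_le_one (hm : m ≤ 1) :
    eulerKernel m = (Ioo 0 1).indicator fun r => -r ^ (-m) :=
  if_neg hm.not_gt

lemma measurable_eulerKernel (m : ℝ) : Measurable (eulerKernel m) := by
  have hpow : Measurable fun r : ℝ => r ^ (-m) := by fun_prop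
  rcases lt_or_ge 1 m with hm | hm
  · simpa only [eulerKernel_of_one_lt hm] using hpow.indicator measurableSet_Ioi
  · rw [eulerKernel_of_le_one hm]
    exact hpow.neg.indicator measurableSet_Ioo

lemma integrable_eulerKernel (hm : m ≠ 1) : Integrable (eulerKernel m) := by
  rcases hm.lt_or_gt with hm | hm
  · rw [eulerKernel_of_le_one hm.le, integrable_indicator_iff measurableSet_Ioo]
    refine Integrable.neg ?_
    rw [← IntegrableOn, intervalIntegral.integrableOn_Ioo_rpow_iff one_pos]
    linarith
  · rw [eulerKernel_of_one_lt hm, integrable_indicator_iff measurableSet_Ioi]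
    exact integrableOn_Ioi_rpow_of_lt (by linarith) one_pos

lemma integral_eulerKernel (hm : m ≠ 1) : ∫ r, eulerKernel m r = (m - 1)⁻¹ := by
  rcases hm.lt_or_gt with hm | hm
  · rw [eulerKernel_of_le_one hm.le, integral_indicator measurableSet_Ioo, integral_neg,
      ← integral_Ioc_eq_integral_Ioo, ← intervalIntegral.integral_of_le zero_le_one,
      integral_rpow (Or.inl (by linarith)), Real.one_rpow, Real.zero_rpow (by linarith),
      ← neg_sub 1 m, inv_neg]
    ring
  · rw [eulerKernel_of_one_lt hm, integral_indicator measurableSet_Ioi,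
      integral_Ioi_rpow_of_lt (by linarith) one_pos, Real.one_rpow, neg_div, ← div_neg, one_div]
    ring

lemma integral_norm_eulerKernel (hm : m ≠ 1) : ∫ r, ‖eulerKernel m r‖ = |m - 1|⁻¹ := by
  rcases hm.lt_or_gt with hm' | hm'
  · have hneg : ∀ r, ‖eulerKernel m r‖ = -eulerKernel m r := fun r => by
      rw [eulerKernel_of_le_one hm'.le]
      exact Real.norm_of_nonpos (indicator_nonpos
        (fun r hr => neg_nonpos.2 (Real.rpow_nonneg hr.1.le _)) r)
    simp only [hneg]
    rw [integral_neg, integral_eulerKernel hm, abs_of_neg (by linarith), inv_neg]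
  · have hpos : ∀ r, ‖eulerKernel m r‖ = eulerKernel m r := fun r => by
      rw [eulerKernel_of_one_lt hm']
      exact Real.norm_of_nonneg (indicator_nonneg
        (fun r hr => Real.rpow_nonneg (zero_le_one.trans (le_of_lt hr)) _) r)
    simp only [hpos]
    rw [integral_eulerKernel hm, abs_of_pos (by linarith)]

lemma mul_eulerKernel_of_one_lt (hm : 1 < m) (ψ : ℝ → ℝ) :
    (fun r => ψ r * eulerKernel m r) = (Ioi 1).indicator fun r => ψ r * r ^ (-m) := by
  ext r
  rw [eulerKernel_of_one_lt hm, ← indicator_mul_right]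

lemma mul_eulerKernel_of_le_one (hm : m ≤ 1) (ψ : ℝ → ℝ) :
    (fun r => ψ r * eulerKernel m r) = (Ioo 0 1).indicator fun r => -ψ r * r ^ (-m) := by
  ext r
  rw [eulerKernel_of_le_one hm, ← indicator_mul_right]
  simp only [mul_neg, neg_mul]

lemma hasDerivAt_rpow_mul {φ : ℝ → ℝ} {φ' r : ℝ} (hφ : HasDerivAt φ φ' r) (hr : 0 < r) :
    HasDerivAt (fun r => r ^ (1 - m) * φ r) (-((m - 1) * φ r - r * φ') * r ^ (-m)) r := by
  refine ((Real.hasDerivAt_rpow_const (p := 1 - m) (Or.inl hr.ne')).mul hφ).congr_deriv ?_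
  rw [show 1 - m - 1 = -m by ring, show 1 - m = 1 + -m by ring, Real.rpow_add hr, Real.rpow_one]
  ring

lemma integral_mul_eulerKernel (hm : m ≠ 1) {φ : ℝ → ℝ} (hφ : ContDiff ℝ 1 φ)
    (hφc : HasCompactSupport φ) :
    ∫ r, ((m - 1) * φ r - r * deriv φ r) * eulerKernel m r = φ 1 := by
  have hderiv : ∀ r, HasDerivAt φ (deriv φ r) r := fun r =>
    (hφ.differentiable one_ne_zero r).hasDerivAt
  have hcont := hφ.continuous
  have hcont' : Continuous fun r => (m - 1) * φ r - r * deriv φ r :=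
    (hcont.const_mul _).sub (continuous_id.mul (hφ.continuous_deriv le_rfl))
  obtain ⟨C, hC⟩ : ∃ C, ∀ r, ‖(m - 1) * φ r - r * deriv φ r‖ ≤ C :=
    (hφc.mul_left.sub hφc.deriv.mul_left).exists_bound_of_continuous hcont'
  have hint : Integrable fun r => ((m - 1) * φ r - r * deriv φ r) * eulerKernel m r :=
    (integrable_eulerKernel hm).bdd_mul hcont'.aestronglyMeasurable (Eventually.of_forall hC)
  rcases hm.lt_or_gt with hm | hm
  · rw [mul_eulerKernel_of_le_one hm.le fun r => (m - 1) * φ r - r * deriv φ r] at hint ⊢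
    rw [integrable_indicator_iff measurableSet_Ioo, ← integrableOn_Ioc_iff_integrableOn_Ioo,
      ← intervalIntegrable_iff_integrableOn_Ioc_of_le zero_le_one] at hint
    rw [integral_indicator measurableSet_Ioo, ← integral_Ioc_eq_integral_Ioo,
      ← intervalIntegral.integral_of_le zero_le_one,
      intervalIntegral.integral_eq_sub_of_hasDerivAt_of_le zero_le_one
        ((Real.continuous_rpow_const (by linarith)).mul hcont).continuousOn
        (fun r hr => hasDerivAt_rpow_mul (hderiv r) hr.1) hint]
    simp [Real.zero_rpow (sub_pos.2 hm).ne']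
  · rw [mul_eulerKernel_of_one_lt hm fun r => (m - 1) * φ r - r * deriv φ r] at hint ⊢
    rw [integrable_indicator_iff measurableSet_Ioi] at hint
    rw [integral_indicator measurableSet_Ioi]
    have hzero : Tendsto (fun r => -(r ^ (1 - m) * φ r)) atTop (𝓝 0) := by
      have hvanish := (hasCompactSupport_iff_eventuallyEq.1 hφc).filter_mono
        (coclosedCompact_eq_cocompact (X := ℝ) ▸ atTop_le_cocompact)
      exact tendsto_const_nhds.congr' (hvanish.mono fun r hr => by simp [hr])
    have hprim : ∀ r ∈ Ici (1 : ℝ), HasDerivAt (fun r => -(r ^ (1 - m) * φ r))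
        (((m - 1) * φ r - r * deriv φ r) * r ^ (-m)) r := fun r hr =>
      (hasDerivAt_rpow_mul (hderiv r) (one_pos.trans_le hr)).neg.congr_deriv (by ring)
    rw [integral_Ioi_of_hasDerivAt_of_tendsto' hprim hint hzero]
    simp

-- Since `D` has zero mean, its `L¹` norm is twice the integral of its negative part.
lemma integral_norm_le_two_mul_of_neg_le {X : Type*} [MeasurableSpace X] {μ : Measure X}
    {D h : X → ℝ} (hD : Integrable D μ) (hh : Integrable h μ) (hh₀ : ∀ x, 0 ≤ h x)
    (hDh : ∀ x, -h x ≤ D x) (hD₀ : ∫ x, D x ∂μ = 0) :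
    ∫ x, ‖D x‖ ∂μ ≤ 2 * ∫ x, h x ∂μ :=
  calc ∫ x, ‖D x‖ ∂μ ≤ ∫ x, D x + 2 * h x ∂μ :=
        integral_mono hD.norm (hD.add (hh.const_mul 2)) fun x =>
          abs_le'.2 ⟨by linarith [hh₀ x], by linarith [hDh x]⟩
    _ = 2 * ∫ x, h x ∂μ := by
        rw [integral_add hD (hh.const_mul 2), hD₀, zero_add, integral_const_mul]

lemma neg_inv_sq_le_dilate_eulerKernel_sub (hm : 2 ≤ m) {t : ℝ} (ht : 1 ≤ t) (r : ℝ) :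
    -(Icc 1 t).indicator (fun r => (r ^ 2)⁻¹) r
      ≤ dilate (eulerKernel m) t r - eulerKernel m r := by
  have ht₀ : 0 < t := by linarith
  have hdilate : 0 ≤ dilate (eulerKernel m) t r := by
    rw [dilate, eulerKernel_of_one_lt (by linarith)]
    exact div_nonneg (indicator_nonneg
      (fun r hr => Real.rpow_nonneg (zero_le_one.trans (le_of_lt hr)) _) _) (abs_nonneg _)
  rw [eulerKernel_of_one_lt (by linarith)] at hdilate ⊢
  rcases le_or_gt r 1 with hr | hr
  · rw [indicator_of_notMem (s := Ioi 1) (by simpa using hr), sub_zero]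
    exact (neg_nonpos.2 (indicator_nonneg (fun r _ => by positivity) r)).trans hdilate
  have hr₀ : 0 < r := by linarith
  rcases le_or_gt r t with hrt | hrt
  · rw [indicator_of_mem (s := Icc 1 t) ⟨hr.le, hrt⟩, indicator_of_mem (s := Ioi 1) hr]
    have hpow : r ^ (-m) ≤ (r ^ 2)⁻¹ := by
      rw [← Real.rpow_natCast, ← Real.rpow_neg hr₀.le]
      exact Real.rpow_le_rpow_of_exponent_le hr.le (by push_cast; linarith)
    linarith
  · rw [indicator_of_notMem (s := Icc 1 t) (by simp [hrt]), indicator_of_mem (s := Ioi 1) hr,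
      neg_zero, sub_nonneg, dilate, indicator_of_mem (s := Ioi 1) ((one_lt_div ht₀).2 hrt),
      abs_of_pos ht₀, Real.div_rpow hr₀.le ht₀.le, div_div, le_div_iff₀ (by positivity)]
    have hpow : t ^ (-m) * t ≤ 1 := by
      rw [← Real.rpow_add_one ht₀.ne']
      exact Real.rpow_le_one_of_one_le_of_nonpos ht (by linarith)
    exact mul_le_of_le_one_right (Real.rpow_nonneg hr₀.le _) hpow

lemma neg_inv_le_dilate_eulerKernel_sub (hm : m ≤ 0) {t : ℝ} (ht : 1 ≤ t) (r : ℝ) :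
    -(Icc 1 t).indicator (fun _ => t⁻¹) r ≤ dilate (eulerKernel m) t r - eulerKernel m r := by
  have ht₀ : 0 < t := by linarith
  rw [dilate, eulerKernel_of_le_one (by linarith), abs_of_pos ht₀]
  by_cases hrt : r ∈ Ioo 0 t
  · have hmem : r / t ∈ Ioo (0 : ℝ) 1 := ⟨div_pos hrt.1 ht₀, (div_lt_one ht₀).2 hrt.2⟩
    rw [indicator_of_mem hmem, neg_div, div_eq_mul_inv]
    rcases lt_or_ge r 1 with hr | hr
    · rw [indicator_of_notMem (s := Icc 1 t) (by simp [hr]),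
        indicator_of_mem (s := Ioo 0 1) ⟨hrt.1, hr⟩]
      have hpow : (r / t) ^ (-m) * t⁻¹ ≤ r ^ (-m) * 1 := by
        gcongr
        · exact Real.rpow_nonneg hrt.1.le _
        · exact div_nonneg hrt.1.le ht₀.le
        · linarith
        · exact div_le_self hrt.1.le ht
        · exact inv_le_one_of_one_le₀ ht
      linarith
    · rw [indicator_of_mem (s := Icc 1 t) ⟨hr, hrt.2.le⟩,
        indicator_of_notMem (s := Ioo 0 1) (by simp [hr])]
      have hpow : (r / t) ^ (-m) * t⁻¹ ≤ t⁻¹ :=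
        mul_le_of_le_one_left (by positivity)
          (Real.rpow_le_one hmem.1.le hmem.2.le (by linarith))
      linarith
  · have hrt' : r / t ∉ Ioo (0 : ℝ) 1 := fun h =>
      hrt ⟨(div_pos_iff_of_pos_right ht₀).1 h.1, (div_lt_one ht₀).1 h.2⟩
    have hr : r ∉ Ioo (0 : ℝ) 1 := fun h => hrt ⟨h.1, h.2.trans_le ht⟩
    rw [indicator_of_notMem hrt', indicator_of_notMem hr]
    simpa using indicator_nonneg (fun _ _ => by positivity) r

lemma integral_norm_dilate_eulerKernel_sub_le_of_one_le (hm : 1 ≤ |m - 1|) {t : ℝ} (ht : 1 ≤ t) :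
    ∫ r, ‖dilate (eulerKernel m) t r - eulerKernel m r‖ ≤ 2 * (1 - t⁻¹) := by
  have ht₀ : 0 < t := by linarith
  have hm₁ : m ≠ 1 := ne_of_one_le_abs_sub hm
  have hκ := integrable_eulerKernel hm₁
  have hκt := integrable_dilate hκ ht₀.ne'
  have hmean : ∫ r, dilate (eulerKernel m) t r - eulerKernel m r = 0 := by
    rw [integral_sub hκt hκ, integral_dilate _ ht₀.ne', sub_self]
  rcases le_abs'.1 hm with hm | hm
  · refine (integral_norm_le_two_mul_of_neg_le (hκt.sub hκ) ?_ ?_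
      (neg_inv_le_dilate_eulerKernel_sub (by linarith) ht) hmean).trans_eq ?_
    · exact (integrable_indicator_iff measurableSet_Icc).2 (by simp)
    · exact indicator_nonneg fun _ _ => by positivity
    · rw [integral_indicator measurableSet_Icc]
      simp [ht, sub_mul, ht₀.ne']
  · have hcont : ContinuousOn (fun r : ℝ => (r ^ 2)⁻¹) (Icc 1 t) :=
      (continuousOn_pow 2).inv₀ fun r hr => by have := hr.1; positivity
    refine (integral_norm_le_two_mul_of_neg_le (hκt.sub hκ) ?_ ?_
      (neg_inv_sq_le_dilate_eulerKernel_sub (by linarith) ht) hmean).trans_eq ?_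
    · exact (integrable_indicator_iff measurableSet_Icc).2 hcont.integrableOn_Icc
    · exact indicator_nonneg fun _ _ => by positivity
    · have hderiv : ∀ r ∈ uIcc 1 t, HasDerivAt (fun r => -r⁻¹) ((r ^ 2)⁻¹) r := fun r hr =>
        (hasDerivAt_inv (one_pos.trans_le (uIcc_of_le ht ▸ hr).1).ne').neg.congr_deriv (neg_neg _)
      rw [integral_indicator measurableSet_Icc, integral_Icc_eq_integral_Ioc,
        ← intervalIntegral.integral_of_le ht, intervalIntegral.integral_eq_sub_of_hasDerivAt hderiv
          (hcont.mono (uIcc_of_le ht).subset).intervalIntegrable, inv_one]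
      ring

lemma integral_norm_dilate_eulerKernel_sub_le (hm : 1 ≤ |m - 1|) {t : ℝ} (ht : t ≠ 0) :
    ∫ r, ‖dilate (eulerKernel m) t r - eulerKernel m r‖ ≤ 2 * |t - 1| := by
  have hm₁ : m ≠ 1 := ne_of_one_le_abs_sub hm
  have hκ := integrable_eulerKernel hm₁
  rcases ht.lt_or_gt with ht₀ | ht₀
  · calc ∫ r, ‖dilate (eulerKernel m) t r - eulerKernel m r‖
        ≤ ∫ r, ‖dilate (eulerKernel m) t r‖ + ‖eulerKernel m r‖ :=
          integral_mono ((integrable_dilate hκ ht).sub hκ).norm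
            ((integrable_dilate hκ ht).norm.add hκ.norm) fun _ => norm_sub_le _ _
      _ = 2 * |m - 1|⁻¹ := by
          rw [integral_add (integrable_dilate hκ ht).norm hκ.norm, integral_norm_dilate _ ht,
            integral_norm_eulerKernel hm₁, two_mul]
      _ ≤ 2 * |t - 1| := by
          gcongr
          exact (inv_le_one_of_one_le₀ hm).trans (le_abs.2 (Or.inr (by linarith)))
  rcases le_total 1 t with ht₁ | ht₁
  · refine (integral_norm_dilate_eulerKernel_sub_le_of_one_le hm ht₁).trans ?_
    have hinv : 1 - t⁻¹ ≤ t - 1 :=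
      (Real.one_sub_inv_le_log_of_pos ht₀).trans (Real.log_le_sub_one_of_pos ht₀)
    rw [abs_of_nonneg (by linarith)]
    linarith
  · have hswap := integral_norm_dilate_sub_dilate (eulerKernel m) 1 ht
    rw [dilate_one] at hswap
    simp only [norm_sub_rev (dilate (eulerKernel m) t _)]
    rw [hswap, one_div, abs_sub_comm, abs_of_nonneg (by linarith)]
    simpa using integral_norm_dilate_eulerKernel_sub_le_of_one_le hm (one_le_inv₀ ht₀ |>.2 ht₁)

end EulerKernel

section TestFunctions

/-- The test functions of order `k`: the space `C_cᵏ(ℝ)`. -/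
structure IsTestFunction (k : ℕ) (φ : ℝ → ℝ) : Prop where
  contDiff : ContDiff ℝ k φ
  hasCompactSupport : HasCompactSupport φ

namespace IsTestFunction

variable {j k : ℕ} {φ ψ : ℝ → ℝ}

lemma of_le (hφ : IsTestFunction k φ) (hjk : j ≤ k) : IsTestFunction j φ :=
  ⟨hφ.contDiff.of_le (by exact_mod_cast hjk), hφ.hasCompactSupport⟩

lemma continuous (hφ : IsTestFunction k φ) : Continuous φ :=
  hφ.contDiff.continuous

lemma differentiable (hφ : IsTestFunction (k + 1) φ) : Differentiable ℝ φ :=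
  hφ.contDiff.differentiable (by simp)

lemma exists_bound (hφ : IsTestFunction k φ) : ∃ C, ∀ x, ‖φ x‖ ≤ C :=
  hφ.hasCompactSupport.exists_bound_of_continuous hφ.continuous

lemma deriv (hφ : IsTestFunction (k + 1) φ) : IsTestFunction k (deriv φ) :=
  ⟨(contDiff_succ_iff_deriv.1 (by exact_mod_cast hφ.contDiff)).2.2, hφ.hasCompactSupport.deriv⟩

lemma add (hφ : IsTestFunction k φ) (hψ : IsTestFunction k ψ) :
    IsTestFunction k fun p => φ p + ψ p :=
  ⟨hφ.contDiff.add hψ.contDiff, hφ.hasCompactSupport.add hψ.hasCompactSupport⟩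

lemma smooth_mul (hφ : IsTestFunction k φ) {χ : ℝ → ℝ} (hχ : ContDiff ℝ k χ) :
    IsTestFunction k fun p => χ p * φ p :=
  ⟨hχ.mul hφ.contDiff, hφ.hasCompactSupport.mul_left⟩

lemma comp_mul_add (hφ : IsTestFunction k φ) {a : ℝ} (ha : a ≠ 0) (b : ℝ) :
    IsTestFunction k fun r => φ (a * r + b) :=
  ⟨hφ.contDiff.comp (by fun_prop),
    hφ.hasCompactSupport.comp_homeomorph ((Homeomorph.mulLeft₀ a ha).trans (Homeomorph.addRight b))⟩

end IsTestFunction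

/-- The operator `Q† + m`, for a real parameter `n` in `Q = (p - n)∂_p`. -/
noncomputable def shiftedQdag (n m : ℝ) (φ : ℝ → ℝ) : ℝ → ℝ :=
  fun p => Qdag n φ p + m * φ p

variable {k : ℕ} {φ : ℝ → ℝ}

lemma Qdag_apply (n : ℝ) {p : ℝ} (hφ : DifferentiableAt ℝ φ p) :
    Qdag n φ p = -(φ p + (p - n) * deriv φ p) := by
  have hprod := ((hasDerivAt_id p).sub_const n).fun_mul hφ.hasDerivAt
  rw [one_mul] at hprod
  exact congrArg Neg.neg hprod.deriv

lemma shiftedQdag_apply (n m : ℝ) {p : ℝ} (hφ : DifferentiableAt ℝ φ p) :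
    shiftedQdag n m φ p = (m - 1) * φ p - (p - n) * deriv φ p := by
  rw [shiftedQdag, Qdag_apply n hφ]
  ring

lemma shiftedQdag_apply_self (n m : ℝ) (hφ : DifferentiableAt ℝ φ n) :
    shiftedQdag n m φ n = (m - 1) * φ n := by
  rw [shiftedQdag_apply n m hφ, sub_self, zero_mul, sub_zero]

lemma isTestFunction_shiftedQdag (hφ : IsTestFunction (k + 1) φ) (n m : ℝ) :
    IsTestFunction k (shiftedQdag n m φ) := by
  have hprod : IsTestFunction (k + 1) fun p => (p - n) * φ p := hφ.smooth_mul (by fun_prop)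
  have heq : shiftedQdag n m φ = fun p => -1 * deriv (fun q => (q - n) * φ q) p + m * φ p := by
    ext p
    simp only [shiftedQdag, Qdag, neg_one_mul]
  rw [heq]
  exact (hprod.deriv.smooth_mul contDiff_const).add
    ((hφ.of_le k.le_succ).smooth_mul contDiff_const)

lemma Pdag_eq_shiftedQdag : Pdag = shiftedQdag 0 0 := by
  ext φ p
  simp [Pdag, shiftedQdag, Qdag]

lemma Aop_eq (μ : ℝ) (n : ℤ) (hφ : Differentiable ℝ φ) :
    Aop μ n φ = fun p =>
      shiftedQdag 0 0 (shiftedQdag n ((2 + n) * μ) (shiftedQdag n ((2 - n) * μ) φ)) p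
        - (2 * μ - 1) * (n * deriv φ p) := by
  ext p
  have hdiff : Qdag n φ p - Pdag φ p = n * deriv φ p := by
    rw [Pdag_eq_shiftedQdag, shiftedQdag, Qdag_apply _ (hφ p), Qdag_apply _ (hφ p)]
    ring
  rw [← hdiff, ← Pdag_eq_shiftedQdag]
  rfl

end TestFunctions

section Pairing

variable {E : Type*} [NormedAddCommGroup E] [NormedSpace ℝ E] {k : ℕ} {φ ψ : ℝ → ℝ}

/-- The pairing `⟨φ, u⟩ = ∫ φ u dλ` of a test function with the (vector-valued) measure `u·λ`. -/
noncomputable def pairing (φ : ℝ → ℝ) (u : ℝ →₁[volume] E) : E :=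
  ∫ p, φ p • u p

lemma pairing_toL1 (φ : ℝ → ℝ) {g : ℝ → E} (hg : Integrable g) :
    pairing φ (hg.toL1 g) = ∫ p, φ p • g p := by
  refine integral_congr_ae ?_
  filter_upwards [hg.coeFn_toL1] with p hp
  rw [hp]

lemma IsTestFunction.integrable_smul (hφ : IsTestFunction k φ) (u : ℝ →₁[volume] E) :
    Integrable fun p => φ p • u p := by
  obtain ⟨C, hC⟩ := hφ.exists_bound
  exact (L1.integrable_coeFn u).bdd_smul C hφ.continuous.aestronglyMeasurable
    (Eventually.of_forall hC)

lemma pairing_sub (hφ : IsTestFunction k φ) (u v : ℝ →₁[volume] E) :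
    pairing φ (u - v) = pairing φ u - pairing φ v := by
  rw [pairing, pairing, pairing, ← integral_sub (hφ.integrable_smul u) (hφ.integrable_smul v)]
  refine integral_congr_ae ?_
  filter_upwards [Lp.coeFn_sub u v] with p hp
  rw [hp, Pi.sub_apply, smul_sub]

lemma pairing_add (hφ : IsTestFunction k φ) (u v : ℝ →₁[volume] E) :
    pairing φ (u + v) = pairing φ u + pairing φ v := by
  rw [pairing, pairing, pairing, ← integral_add (hφ.integrable_smul u) (hφ.integrable_smul v)]
  refine integral_congr_ae ?_
  filter_upwards [Lp.coeFn_add u v] with p hp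
  rw [hp, Pi.add_apply, smul_add]

lemma pairing_smul (φ : ℝ → ℝ) (a : ℝ) (u : ℝ →₁[volume] E) :
    pairing φ (a • u) = a • pairing φ u := by
  rw [pairing, pairing, ← integral_smul]
  refine integral_congr_ae ?_
  filter_upwards [Lp.coeFn_smul a u] with p hp
  rw [hp, Pi.smul_apply, smul_comm]

lemma pairing_sub_mul_left (hφ : IsTestFunction k φ) (hψ : IsTestFunction k ψ) (a : ℝ)
    (u : ℝ →₁[volume] E) :
    pairing (fun p => φ p - a * ψ p) u = pairing φ u - a • pairing ψ u := by
  simp only [pairing, sub_smul, mul_smul]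
  rw [integral_sub (hφ.integrable_smul u) ((hψ.integrable_smul u).fun_smul a), integral_smul]

end Pairing

section Resolvent

variable {E : Type*} [NormedAddCommGroup E] [NormedSpace ℝ E] {n m s : ℝ} {φ : ℝ → ℝ}

/-- The kernel of the resolvent `(Q + m)⁻¹`: the section `resolventKernel n m · s` is the density
of a solution of `(Q + m) u = δ_s`, obtained from `eulerKernel m` by centring at `n` and dilating by
`s - n`. -/
noncomputable def resolventKernel (n m p s : ℝ) : ℝ :=
  dilate (eulerKernel m) (s - n) (p - n)

lemma measurable_resolventKernel (n m : ℝ) :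
    Measurable (Function.uncurry (resolventKernel n m)) := by
  have hκ := measurable_eulerKernel m
  unfold resolventKernel dilate Function.uncurry
  fun_prop

lemma integrable_resolventKernel (hm : m ≠ 1) (hs : s ≠ n) :
    Integrable fun p => resolventKernel n m p s :=
  (integrable_dilate (integrable_eulerKernel hm) (sub_ne_zero.2 hs)).comp_sub_right n

lemma integral_norm_resolventKernel (hm : m ≠ 1) (hs : s ≠ n) :
    ∫ p, ‖resolventKernel n m p s‖ = |m - 1|⁻¹ := by
  simp only [resolventKernel]
  rw [integral_sub_right_eq_self fun p => ‖dilate (eulerKernel m) (s - n) p‖,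
    integral_norm_dilate _ (sub_ne_zero.2 hs), integral_norm_eulerKernel hm]

lemma isL1Kernel_resolventKernel (n : ℝ) (hm : m ≠ 1) :
    IsL1Kernel volume volume (resolventKernel n m) |m - 1|⁻¹ where
  aestronglyMeasurable := (measurable_resolventKernel n m).aestronglyMeasurable
  integrable := (Measure.ae_ne volume n).mono fun _ hs => integrable_resolventKernel hm hs
  integral_norm_le := (Measure.ae_ne volume n).mono fun _ hs =>
    (integral_norm_resolventKernel hm hs).le

lemma integral_shiftedQdag_mul_resolventKernel (hm : m ≠ 1) (hφ : IsTestFunction 1 φ)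
    (hs : s ≠ n) : ∫ p, shiftedQdag n m φ p * resolventKernel n m p s = φ s := by
  have hs' := sub_ne_zero.2 hs
  have hφ' : IsTestFunction 1 fun r => φ ((s - n) * r + n) := hφ.comp_mul_add hs' n
  have hderiv : ∀ r, deriv (fun r => φ ((s - n) * r + n)) r
      = deriv φ ((s - n) * r + n) * (s - n) := fun r => by
    have hline : HasDerivAt (fun r => (s - n) * r + n) (s - n) r := by
      simpa using ((hasDerivAt_id r).const_mul (s - n)).add_const n
    exact ((hφ.differentiable _).hasDerivAt.comp r hline).deriv
  calc ∫ p, shiftedQdag n m φ p * resolventKernel n m p s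
      = ∫ p, shiftedQdag n m φ (p + n) * dilate (eulerKernel m) (s - n) p := by
        rw [← integral_add_right_eq_self _ n]
        simp only [resolventKernel, add_sub_cancel_right]
    _ = ∫ r, ((m - 1) * φ ((s - n) * r + n)
          - r * deriv (fun r => φ ((s - n) * r + n)) r) * eulerKernel m r := by
        rw [integral_mul_dilate (fun p => shiftedQdag n m φ (p + n)) _ hs']
        refine integral_congr_ae (Eventually.of_forall fun r => ?_)
        simp only [shiftedQdag_apply n m (hφ.differentiable _), hderiv]
        ring
    _ = φ s := by
        rw [integral_mul_eulerKernel hm hφ'.contDiff hφ'.hasCompactSupport, mul_one,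
          sub_add_cancel]

/-- The resolvent `(Q + m)⁻¹` on `L¹`, which exists for `m ≠ 1`. -/
noncomputable def resolventCLM (n : ℝ) (hm : m ≠ 1) :
    (ℝ →₁[volume] E) →L[ℝ] (ℝ →₁[volume] E) :=
  (isL1Kernel_resolventKernel n hm).op

lemma norm_resolventCLM_le (n : ℝ) (hm : m ≠ 1) :
    ‖(resolventCLM n hm : (ℝ →₁[volume] E) →L[ℝ] (ℝ →₁[volume] E))‖ ≤ |m - 1|⁻¹ :=
  (isL1Kernel_resolventKernel n hm).norm_op_le (by positivity)

lemma norm_resolventCLM_apply_le (n : ℝ) (hm : m ≠ 1) (g : ℝ →₁[volume] E) :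
    ‖resolventCLM n hm g‖ ≤ |m - 1|⁻¹ * ‖g‖ :=
  ContinuousLinearMap.le_of_opNorm_le _ (norm_resolventCLM_le n hm) g

lemma pairing_op [CompleteSpace E] {k : ℝ → ℝ → ℝ} {M : ℝ} (hk : IsL1Kernel volume volume k M)
    {j : ℕ} {ψ : ℝ → ℝ} (hψ : IsTestFunction j ψ) (g : ℝ →₁[volume] E) :
    pairing ψ (hk.op g) = ∫ s, (∫ p, ψ p * k p s) • g s :=
  have ⟨_, hC⟩ := hψ.exists_bound
  hk.integral_smul_op g hψ.continuous.aestronglyMeasurable hC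

lemma pairing_shiftedQdag_resolventCLM [CompleteSpace E] (n : ℝ) (hm : m ≠ 1)
    (hφ : IsTestFunction 1 φ) (g : ℝ →₁[volume] E) :
    pairing (shiftedQdag n m φ) (resolventCLM n hm g) = pairing φ g := by
  rw [resolventCLM, pairing_op _ (isTestFunction_shiftedQdag hφ n m)]
  refine integral_congr_ae ?_
  filter_upwards [Measure.ae_ne volume n] with s hs
  rw [integral_shiftedQdag_mul_resolventKernel hm hφ hs]

lemma exists_pairing_shiftedQdag_eq_add_dirac [CompleteSpace E] (hm : m ≠ 1) (hs : s ≠ n)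
    (g : ℝ →₁[volume] E) (c : E) :
    ∃ z : ℝ →₁[volume] E, ‖z‖ ≤ |m - 1|⁻¹ * (‖g‖ + ‖c‖) ∧
      ∀ φ, IsTestFunction 1 φ → pairing (shiftedQdag n m φ) z = pairing φ g + φ s • c := by
  have hint := (integrable_resolventKernel hm hs).smul_const c
  refine ⟨resolventCLM n hm g + hint.toL1 _, ?_, fun φ hφ => ?_⟩
  · rw [mul_add]
    refine norm_add_le_of_le (norm_resolventCLM_apply_le n hm g) (le_of_eq ?_)
    simp only [L1.norm_of_fun_eq_integral_norm, norm_smul]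
    rw [integral_mul_const, integral_norm_resolventKernel hm hs]
  · rw [pairing_add (isTestFunction_shiftedQdag hφ n m), pairing_shiftedQdag_resolventCLM n hm hφ,
      ← integral_shiftedQdag_mul_resolventKernel hm hφ hs, ← integral_smul_const]
    congr 1
    refine integral_congr_ae ?_
    filter_upwards [hint.coeFn_toL1] with p hp
    rw [hp, smul_smul]

end Resolvent

section SlopeKernel

variable {E : Type*} [NormedAddCommGroup E] [NormedSpace ℝ E] {n m s : ℝ} {φ : ℝ → ℝ}

lemma integral_deriv_mul_resolventKernel_zero (hφ : IsTestFunction 1 φ) (hs : s ≠ 0) :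
    ∫ p, deriv φ p * resolventKernel 0 0 p s = (φ 0 - φ s) / s := by
  have hderiv : ∀ p ∈ uIcc 0 s, HasDerivAt φ (deriv φ p) p := fun p _ =>
    (hφ.differentiable p).hasDerivAt
  calc ∫ p, deriv φ p * resolventKernel 0 0 p s
      = ∫ r, deriv φ (s * r) * eulerKernel 0 r := by
        simp only [resolventKernel, sub_zero]
        exact integral_mul_dilate _ _ hs
    _ = -∫ r in (0 : ℝ)..1, deriv φ (s * r) := by
        rw [mul_eulerKernel_of_le_one zero_le_one fun r => deriv φ (s * r),
          integral_indicator measurableSet_Ioo, ← integral_Ioc_eq_integral_Ioo,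
          ← intervalIntegral.integral_of_le zero_le_one, ← intervalIntegral.integral_neg]
        simp
    _ = (φ 0 - φ s) / s := by
        rw [intervalIntegral.integral_comp_mul_left _ hs, mul_zero, mul_one,
          intervalIntegral.integral_eq_sub_of_hasDerivAt hderiv
            (hφ.deriv.continuous.intervalIntegrable 0 s), smul_eq_mul]
        ring

/-- The kernel of `(Q + m)⁻¹ (Q - P) P⁻¹`. As `Q - P = -n ∂_p` and `∂_p P⁻¹ δ_s = (δ_s - δ₀) / s`,
it is `-n` times the difference quotient of the resolvent kernel between `0` and `s`. -/
noncomputable def slopeKernel (n m p s : ℝ) : ℝ :=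
  n / s * (resolventKernel n m p 0 - resolventKernel n m p s)

lemma integral_norm_slopeKernel_le (hn : n ≠ 0) (hm : 1 ≤ |m - 1|) (hs₀ : s ≠ 0)
    (hs : s ≠ n) : ∫ p, ‖slopeKernel n m p s‖ ≤ 2 := by
  have hratio : (s - n) / (0 - n) - 1 = -(s / n) := by
    rw [zero_sub]
    field_simp
    ring
  have hdiff : ∫ p, ‖resolventKernel n m p s - resolventKernel n m p 0‖ ≤ 2 * |s / n| := by
    simp only [resolventKernel]
    rw [integral_sub_right_eq_self fun p =>
      ‖dilate (eulerKernel m) (s - n) p - dilate (eulerKernel m) (0 - n) p‖,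
      integral_norm_dilate_sub_dilate _ _ (sub_ne_zero.2 hn.symm), ← abs_neg (s / n), ← hratio]
    exact integral_norm_dilate_eulerKernel_sub_le hm
      (div_ne_zero (sub_ne_zero.2 hs) (sub_ne_zero.2 hn.symm))
  simp only [slopeKernel, norm_mul, norm_sub_rev (resolventKernel n m _ 0)]
  calc ∫ p, ‖n / s‖ * ‖resolventKernel n m p s - resolventKernel n m p 0‖
      ≤ ‖n / s‖ * (2 * |s / n|) := by
        rw [integral_const_mul]
        gcongr
    _ = 2 := by
        rw [Real.norm_eq_abs, mul_left_comm, ← abs_mul, div_mul_div_cancel₀ hs₀, div_self hn,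
          abs_one, mul_one]

lemma isL1Kernel_slopeKernel (hn : n ≠ 0) (hm : 1 ≤ |m - 1|) :
    IsL1Kernel volume volume (slopeKernel n m) 2 where
  aestronglyMeasurable := by
    have hR := measurable_resolventKernel n m
    have hR₀ : Measurable fun z : ℝ × ℝ => resolventKernel n m z.1 0 :=
      hR.comp (measurable_fst.prodMk measurable_const)
    exact ((measurable_const.div measurable_snd).mul (hR₀.sub hR)).aestronglyMeasurable
  integrable := (Measure.ae_ne volume n).mono fun s hs => by
    have hm₁ : m ≠ 1 := ne_of_one_le_abs_sub hm
    exact ((integrable_resolventKernel hm₁ hn.symm).sub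
      (integrable_resolventKernel hm₁ hs)).const_mul _
  integral_norm_le := by
    filter_upwards [Measure.ae_ne volume 0, Measure.ae_ne volume n] with s hs₀ hs
    exact integral_norm_slopeKernel_le hn hm hs₀ hs

lemma integral_shiftedQdag_mul_slopeKernel (hn : n ≠ 0) (hm : m ≠ 1)
    (hφ : IsTestFunction 1 φ) (hs : s ≠ n) :
    ∫ p, shiftedQdag n m φ p * slopeKernel n m p s = n * ((φ 0 - φ s) / s) := by
  have hQφ := isTestFunction_shiftedQdag hφ n m
  obtain ⟨C, hC⟩ := hQφ.exists_bound
  have hint : ∀ t ≠ n, Integrable fun p => shiftedQdag n m φ p * resolventKernel n m p t :=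
    fun t ht => (integrable_resolventKernel hm ht).bdd_mul hQφ.continuous.aestronglyMeasurable
      (Eventually.of_forall hC)
  simp only [slopeKernel, mul_left_comm _ (n / s), mul_sub]
  rw [integral_sub ((hint 0 hn.symm).const_mul _) ((hint s hs).const_mul _), integral_const_mul,
    integral_const_mul, integral_shiftedQdag_mul_resolventKernel hm hφ hn.symm,
    integral_shiftedQdag_mul_resolventKernel hm hφ hs]
  ring

/-- The operator `P⁻¹` on `L¹`. -/
noncomputable def invP : (ℝ →₁[volume] E) →L[ℝ] (ℝ →₁[volume] E) :=
  resolventCLM 0 zero_ne_one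

lemma norm_invP_apply_le (w : ℝ →₁[volume] E) : ‖invP w‖ ≤ ‖w‖ := by
  simpa [invP] using norm_resolventCLM_apply_le 0 zero_ne_one w

lemma exists_pairing_shiftedQdag_eq_deriv_invP [CompleteSpace E] (hn : n ≠ 0) (hm : 1 ≤ |m - 1|) :
    ∃ Z : (ℝ →₁[volume] E) →L[ℝ] (ℝ →₁[volume] E), ‖Z‖ ≤ 2 ∧
      ∀ φ, IsTestFunction 1 φ → ∀ w,
        pairing (shiftedQdag n m φ) (Z w) = n • pairing (deriv φ) (invP w) := by
  have hm₁ : m ≠ 1 := ne_of_one_le_abs_sub hm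
  refine ⟨(isL1Kernel_slopeKernel hn hm).op, IsL1Kernel.norm_op_le _ zero_le_two,
    fun φ hφ w => ?_⟩
  rw [pairing_op _ (isTestFunction_shiftedQdag hφ n m), invP, resolventCLM, pairing_op _ hφ.deriv,
    ← integral_smul]
  refine integral_congr_ae ?_
  filter_upwards [Measure.ae_ne volume 0, Measure.ae_ne volume n] with s hs₀ hs
  rw [integral_shiftedQdag_mul_slopeKernel hn hm₁ hφ hs,
    integral_deriv_mul_resolventKernel_zero hφ hs₀, mul_smul]

end SlopeKernel

lemma half_abs_le_abs_add {a b : ℝ} (hab : 2 * |a| ≤ |b|) : |b| / 2 ≤ |a + b| := by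
  have htri : |b| - |a| ≤ |a + b| := by
    simpa [add_comm] using abs_sub_abs_le_abs_sub b (-a)
  linarith

section Inversion

variable {E : Type*} [NormedAddCommGroup E] [NormedSpace ℝ E] [CompleteSpace E]

lemma exists_pairing_sub_deriv_invP_eq {n m₁ m₂ ν : ℝ} (hn : n ≠ 0) (hm₁ : m₁ ≠ 1)
    (hm₂ : 1 ≤ |m₂ - 1|) (hν : 4 * |ν| ≤ |m₁ - 1|) (z : ℝ →₁[volume] E) :
    ∃ w : ℝ →₁[volume] E, ‖w‖ ≤ 2 * (|m₁ - 1|⁻¹ * ‖z‖) ∧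
      ∀ φ, IsTestFunction 2 φ →
        pairing (shiftedQdag n m₁ (shiftedQdag n m₂ φ)) w - ν • n • pairing (deriv φ) (invP w)
          = pairing (shiftedQdag n m₂ φ) z := by
  obtain ⟨Z, hZ, hZφ⟩ := exists_pairing_shiftedQdag_eq_deriv_invP (E := E) hn hm₂
  set R : (ℝ →₁[volume] E) →L[ℝ] (ℝ →₁[volume] E) := resolventCLM n hm₁
  have hT : ‖ν • (R ∘L Z)‖ ≤ 2⁻¹ :=
    calc ‖ν • (R ∘L Z)‖ ≤ |ν| * (|m₁ - 1|⁻¹ * 2) := by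
          rw [norm_smul, Real.norm_eq_abs]
          gcongr
          exact (R.opNorm_comp_le Z).trans
            (mul_le_mul (norm_resolventCLM_le n hm₁) hZ (norm_nonneg _) (by positivity))
      _ ≤ 2⁻¹ := by
          have hpos : 0 < |m₁ - 1| := abs_pos.2 (sub_ne_zero.2 hm₁)
          field_simp
          linarith
  obtain ⟨w, hw, hwz⟩ := exists_sub_apply_eq _ (hT.trans_lt (by norm_num)) (R z)
  refine ⟨w, ?_, fun φ hφ => ?_⟩
  · calc ‖w‖ ≤ (1 - 2⁻¹)⁻¹ * (|m₁ - 1|⁻¹ * ‖z‖) := by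
          refine hwz.trans (mul_le_mul ?_ (norm_resolventCLM_apply_le n hm₁ z)
            (norm_nonneg _) (by norm_num))
          gcongr
      _ = 2 * (|m₁ - 1|⁻¹ * ‖z‖) := by norm_num
  · have hQφ : IsTestFunction 1 (shiftedQdag n m₂ φ) := isTestFunction_shiftedQdag hφ n m₂
    have hRφ : ∀ v, pairing (shiftedQdag n m₁ (shiftedQdag n m₂ φ)) (R v)
        = pairing (shiftedQdag n m₂ φ) v := pairing_shiftedQdag_resolventCLM n hm₁ hQφ
    calc pairing (shiftedQdag n m₁ (shiftedQdag n m₂ φ)) w - ν • n • pairing (deriv φ) (invP w)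
        = pairing (shiftedQdag n m₁ (shiftedQdag n m₂ φ)) (w - ν • R (Z w)) := by
          rw [pairing_sub (isTestFunction_shiftedQdag hQφ n m₁), pairing_smul, hRφ,
            hZφ φ (hφ.of_le one_le_two)]
      _ = pairing (shiftedQdag n m₁ (shiftedQdag n m₂ φ)) (R z) := congrArg _ hw
      _ = pairing (shiftedQdag n m₂ φ) z := hRφ z

lemma exists_pairing_eq_add_dirac_of_ne_zero {n m₁ m₂ ν : ℝ} (hn : n ≠ 0) (hm₁ : m₁ ≠ 1)
    (hm₂ : 1 ≤ |m₂ - 1|) (hν : 4 * |ν| ≤ |m₁ - 1|) (g : ℝ →₁[volume] E) (c : E) :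
    ∃ u : ℝ →₁[volume] E, ‖u‖ ≤ 2 * (|m₁ - 1|⁻¹ * (|m₂ - 1|⁻¹ * (‖g‖ + ‖c‖))) ∧
      ∀ φ, IsTestFunction 3 φ →
        pairing (fun p => shiftedQdag 0 0 (shiftedQdag n m₁ (shiftedQdag n m₂ φ)) p
          - ν * (n * deriv φ p)) u = pairing φ g + φ 0 • c := by
  have hm₂' : m₂ ≠ 1 := ne_of_one_le_abs_sub hm₂
  obtain ⟨z, hz, hzφ⟩ := exists_pairing_shiftedQdag_eq_add_dirac hm₂' hn.symm g c
  obtain ⟨w, hw, hwφ⟩ := exists_pairing_sub_deriv_invP_eq hn hm₁ hm₂ hν z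
  refine ⟨invP w, ?_, fun φ hφ => ?_⟩
  · refine (norm_invP_apply_le w).trans (hw.trans ?_)
    gcongr
  · have hQQφ : IsTestFunction 1 (shiftedQdag n m₁ (shiftedQdag n m₂ φ)) :=
      isTestFunction_shiftedQdag (isTestFunction_shiftedQdag hφ n m₂) n m₁
    simp only [← mul_assoc ν]
    rw [pairing_sub_mul_left (isTestFunction_shiftedQdag hQQφ 0 0)
        (hφ.of_le (by norm_num : 1 ≤ 3)).deriv,
      mul_smul, invP, pairing_shiftedQdag_resolventCLM 0 _ hQQφ, ← invP,
      hwφ φ (hφ.of_le (by norm_num)), hzφ φ (hφ.of_le (by norm_num))]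

lemma exists_pairing_eq_add_dirac_zero {m : ℝ} (hm : m ≠ 1) (g : ℝ →₁[volume] E) (c : E) :
    ∃ (u : ℝ →₁[volume] E) (d : E), ‖u‖ + ‖d‖ ≤ ((m - 1) ^ 2)⁻¹ * (‖g‖ + ‖c‖) ∧
      ∀ φ, IsTestFunction 3 φ →
        pairing (shiftedQdag 0 0 (shiftedQdag 0 m (shiftedQdag 0 m φ))) u
          + shiftedQdag 0 0 (shiftedQdag 0 m (shiftedQdag 0 m φ)) 0 • d
          = pairing φ g + φ 0 • c := by
  have hm' : (m - 1) ^ 2 ≠ 0 := pow_ne_zero 2 (sub_ne_zero.2 hm)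
  refine ⟨invP (resolventCLM 0 hm (resolventCLM 0 hm g)), -((m - 1) ^ 2)⁻¹ • c, ?_,
    fun φ hφ => ?_⟩
  · have hu : ‖invP (resolventCLM 0 hm (resolventCLM 0 hm g))‖ ≤ ((m - 1) ^ 2)⁻¹ * ‖g‖ :=
      calc _ ≤ |m - 1|⁻¹ * (|m - 1|⁻¹ * ‖g‖) := by
            refine (norm_invP_apply_le _).trans ((norm_resolventCLM_apply_le 0 hm _).trans ?_)
            gcongr
            exact norm_resolventCLM_apply_le 0 hm g
        _ = ((m - 1) ^ 2)⁻¹ * ‖g‖ := by rw [← mul_assoc, ← mul_inv, abs_mul_abs_self, ← sq]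
    have hd : ‖-((m - 1) ^ 2)⁻¹ • c‖ = ((m - 1) ^ 2)⁻¹ * ‖c‖ := by
      rw [norm_smul, norm_neg, Real.norm_of_nonneg (by positivity)]
    linarith
  · have hQφ : IsTestFunction 2 (shiftedQdag 0 m φ) := isTestFunction_shiftedQdag hφ 0 m
    have hQQφ : IsTestFunction 1 (shiftedQdag 0 m (shiftedQdag 0 m φ)) :=
      isTestFunction_shiftedQdag hQφ 0 m
    rw [invP, pairing_shiftedQdag_resolventCLM 0 _ hQQφ,
      pairing_shiftedQdag_resolventCLM 0 hm (hQφ.of_le one_le_two),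
      pairing_shiftedQdag_resolventCLM 0 hm (hφ.of_le (by norm_num)),
      shiftedQdag_apply_self 0 0 (hQQφ.differentiable 0),
      shiftedQdag_apply_self 0 m (hQφ.differentiable 0),
      shiftedQdag_apply_self 0 m (hφ.differentiable 0), smul_smul]
    congr 2
    linear_combination φ 0 * mul_inv_cancel₀ hm'

lemma exists_pairing_Aop_eq_of_large {μ : ℝ} {n : ℤ} (hn : n ≠ 0)
    (hnμ : 8 * |2 * μ - 1| + 2 ≤ |n * μ|) (g : ℝ →₁[volume] E) (c : E) :
    ∃ u : ℝ →₁[volume] E, ‖u‖ ≤ 16 / μ ^ 2 * (1 + (n : ℝ) ^ 2)⁻¹ * (‖g‖ + ‖c‖) ∧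
      ∀ φ, IsTestFunction 3 φ → pairing (Aop μ n φ) u = pairing φ g + φ 0 • c := by
  have hν := abs_nonneg (2 * μ - 1)
  have hn₀ : (n : ℝ) ≠ 0 := Int.cast_ne_zero.2 hn
  have hμ₀ : μ ≠ 0 := by rintro rfl; norm_num at hnμ
  have hplus : |n * μ| / 2 ≤ |(2 + n) * μ - 1| := by
    rw [show (2 + n) * μ - 1 = 2 * μ - 1 + n * μ by ring]
    exact half_abs_le_abs_add (by linarith)
  have hminus : |n * μ| / 2 ≤ |(2 - n) * μ - 1| := by
    rw [show (2 - n) * μ - 1 = 2 * μ - 1 + -(n * μ) by ring, ← abs_neg (n * μ)]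
    exact half_abs_le_abs_add (by rw [abs_neg]; linarith)
  have hplus₁ : (2 + n) * μ ≠ 1 := fun h => by
    rw [h, sub_self, abs_zero] at hplus
    linarith
  obtain ⟨u, hu, huφ⟩ := exists_pairing_eq_add_dirac_of_ne_zero (ν := 2 * μ - 1) hn₀ hplus₁
    (hminus.trans' (by linarith)) (hplus.trans' (by linarith)) g c
  refine ⟨u, hu.trans ?_, fun φ hφ => ?_⟩
  · calc 2 * (|(2 + n) * μ - 1|⁻¹ * (|(2 - n) * μ - 1|⁻¹ * (‖g‖ + ‖c‖)))
        ≤ 2 * ((|n * μ| / 2)⁻¹ * ((|n * μ| / 2)⁻¹ * (‖g‖ + ‖c‖))) := by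
          have hpos : 0 < |n * μ| / 2 := by positivity
          gcongr 2 * (?_ * (?_ * _))
          · exact inv_anti₀ hpos hplus
          · exact inv_anti₀ hpos hminus
      _ = 16 / μ ^ 2 * (n ^ 2 + n ^ 2 : ℝ)⁻¹ * (‖g‖ + ‖c‖) := by
          rw [abs_mul, ← sq_abs μ, ← sq_abs (n : ℝ)]
          field_simp
          ring
      _ ≤ 16 / μ ^ 2 * (1 + (n : ℝ) ^ 2)⁻¹ * (‖g‖ + ‖c‖) := by
          have hsq : (1 : ℝ) ≤ n ^ 2 := by
            exact_mod_cast Int.add_one_le_of_lt (sq_pos_of_ne_zero hn)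
          gcongr
  · rw [Aop_eq μ n hφ.differentiable]
    exact huφ φ hφ

lemma exists_pairing_Aop_eq_zero {μ : ℝ} (hμ : 2 * μ ≠ 1) (g : ℝ →₁[volume] E) (c : E) :
    ∃ (u : ℝ →₁[volume] E) (d : E), ‖u‖ + ‖d‖ ≤ ((2 * μ - 1) ^ 2)⁻¹ * (‖g‖ + ‖c‖) ∧
      ∀ φ, IsTestFunction 3 φ →
        pairing (Aop μ 0 φ) u + Aop μ 0 φ 0 • d = pairing φ g + φ 0 • c := by
  obtain ⟨u, d, hud, huφ⟩ := exists_pairing_eq_add_dirac_zero hμ g c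
  refine ⟨u, d, hud, fun φ hφ => ?_⟩
  have hA := Aop_eq μ 0 hφ.differentiable
  simp only [Int.cast_zero, add_zero, sub_zero, zero_mul, mul_zero] at hA
  rw [hA]
  exact huφ φ hφ

lemma exists_forall_exists_pairing_Aop_eq {μ : ℝ} (hμ₀ : μ ≠ 0) (hμ₁ : 2 * μ ≠ 1) :
    ∃ (N₀ : ℕ) (C : ℝ), 0 ≤ C ∧ ∀ n : ℤ, (n = 0 ∨ N₀ ≤ n.natAbs) →
      ∀ (g : ℝ →₁[volume] E) (c : E), ∃ (u : ℝ →₁[volume] E) (d : E),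
        ‖u‖ + ‖d‖ ≤ C * (1 + (n : ℝ) ^ 2)⁻¹ * (‖g‖ + ‖c‖) ∧
          ∀ φ, IsTestFunction 3 φ →
            pairing (Aop μ n φ) u + Aop μ n φ 0 • d = pairing φ g + φ 0 • c := by
  obtain ⟨N, hN⟩ := exists_nat_ge ((8 * |2 * μ - 1| + 2) / |μ|)
  rw [div_le_iff₀ (abs_pos.2 hμ₀)] at hN
  refine ⟨N, max (16 / μ ^ 2) ((2 * μ - 1) ^ 2)⁻¹, by positivity, fun n hn g c => ?_⟩
  by_cases hn₀ : n = 0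
  · subst hn₀
    obtain ⟨u, d, hud, huφ⟩ := exists_pairing_Aop_eq_zero hμ₁ g c
    refine ⟨u, d, hud.trans ?_, huφ⟩
    rw [Int.cast_zero, zero_pow two_ne_zero, add_zero, inv_one, mul_one]
    gcongr
    exact le_max_right _ _
  · have hNn : (N : ℝ) ≤ |(n : ℝ)| := by
      rw [← Int.cast_abs, ← Int.natCast_natAbs]
      exact_mod_cast hn.resolve_left hn₀
    have hnμ : 8 * |2 * μ - 1| + 2 ≤ |n * μ| := by
      rw [abs_mul]
      exact hN.trans (by gcongr)
    obtain ⟨u, hu, huφ⟩ := exists_pairing_Aop_eq_of_large hn₀ hnμ g c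
    refine ⟨u, 0, ?_, fun φ hφ => by rw [smul_zero, add_zero, huφ φ hφ]⟩
    rw [norm_zero, add_zero]
    refine hu.trans ?_
    gcongr
    exact le_max_left _ _

theorem Ln_inversion_estimate_general {μ : ℝ} (hμ₀ : μ ≠ 0) (hμ₁ : 2 * μ ≠ 1) :
    ∃ (N₀ : ℕ) (C : ℝ), 0 ≤ C ∧
      ∀ n : ℤ, (n = 0 ∨ N₀ ≤ n.natAbs) →
        ∀ g : ℝ → E, Integrable g → ∀ c : E,
          ∃ h : ℝ → E, ∃ d : E, Integrable h ∧
            (∫ p, ‖h p‖) + ‖d‖ ≤ C * (1 + (n : ℝ) ^ 2)⁻¹ * ((∫ p, ‖g p‖) + ‖c‖) ∧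
            ∀ φ : ℝ → ℝ, ContDiff ℝ 3 φ → HasCompactSupport φ →
              (∫ p, Aop μ n φ p • h p) + Aop μ n φ 0 • d = (∫ p, φ p • g p) + φ 0 • c := by
  obtain ⟨N₀, C, hC, hinv⟩ := exists_forall_exists_pairing_Aop_eq (E := E) hμ₀ hμ₁
  refine ⟨N₀, C, hC, fun n hn g hg c => ?_⟩
  obtain ⟨u, d, hud, huφ⟩ := hinv n hn (hg.toL1 g) c
  refine ⟨u, d, L1.integrable_coeFn u, ?_, fun φ hφ hφc => ?_⟩
  · rwa [L1.norm_of_fun_eq_integral_norm, L1.norm_eq_integral_norm] at hud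
  · rw [← pairing_toL1 φ hg]
    exact huφ φ ⟨hφ, hφc⟩

end Inversion

/-- inversion estimate `‖L_n⁻¹‖ ≲ (1+n²)⁻¹` for the linearized self-similar
Euler operator on the space `L¹(ℝ) + ℂ·δ₀` of finite measures, for the mode `n = 0` and all
sufficiently large `|n|`.  Measures `g·λ + c·δ₀` and `h·λ + d·δ₀` are encoded by the pairs
`(g, c)`, `(h, d)`; their total variation norms are `∫‖g‖ + ‖c‖` resp. `∫‖h‖ + ‖d‖`; the
distributional equation `L_n u = f` means `∫ A_nφ du = ∫ φ df` for all test functions `φ`. -/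
theorem Ln_inversion_estimate (μ : ℝ) (hμ : 1 / 2 < μ) :
    ∃ (N₀ : ℕ) (C : ℝ), 0 ≤ C ∧
      ∀ n : ℤ, (n = 0 ∨ N₀ ≤ n.natAbs) →
        ∀ g : ℝ → ℂ, Integrable g → ∀ c : ℂ,
          ∃ h : ℝ → ℂ, ∃ d : ℂ, Integrable h ∧
            (∫ p, ‖h p‖) + ‖d‖ ≤ C * (1 + (n : ℝ) ^ 2)⁻¹ * ((∫ p, ‖g p‖) + ‖c‖) ∧
            ∀ φ : ℝ → ℝ, ContDiff ℝ (⊤ : ℕ∞) φ → HasCompactSupport φ →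
              (∫ p, ((Aop μ n φ p : ℝ) : ℂ) * h p) + d * ((Aop μ n φ 0 : ℝ) : ℂ)
                = (∫ p, ((φ p : ℝ) : ℂ) * g p) + c * ((φ 0 : ℝ) : ℂ) := by
  obtain ⟨N₀, C, hC, hinv⟩ :=
    Ln_inversion_estimate_general (E := ℂ) (μ := μ) (by linarith) (by linarith)
  refine ⟨N₀, C, hC, fun n hn g hg c => ?_⟩
  obtain ⟨h, d, hh, hbound, heq⟩ := hinv n hn g hg c
  refine ⟨h, d, hh, hbound, fun φ hφ hφc => ?_⟩
  simpa only [Complex.real_smul, mul_comm d, mul_comm c] using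
    heq φ (contDiff_infty.1 hφ 3) hφc
end

section
/- Let μ ∈ (2/3, ∞) and C₀ < ∞. Let v ∈ C¹((ℝ²∖{0})×(0,∞); ℝ²) and π ∈ C¹((ℝ²∖{0})×(0,∞); ℝ) satisfy, pointwise on (ℝ²∖{0})×(0,∞): div_x v = 0 and ∂_t v + (v·∇_x)v + ∇_x π = 0. Assume |v(x,t)| ≤ C₀·|x|^{1−1/μ} for all x ≠ 0 and t > 0, and that there is v₀ : ℝ²∖{0} → ℝ² such that v(·,t) → v₀ uniformly on compact subsets of ℝ²∖{0} as t → 0⁺. Then v is a weak solution of the incompressible Euler equations on all of ℝ²×[0,∞) with initial data v₀: for every w ∈ C_c^∞(ℝ²×[0,∞); ℝ²) with div_x w = 0 everywhere, ∫_{ℝ²} v₀(x)·w(x,0) dx + ∫₀^∞ ∫_{ℝ²} [ v·∂_t w + (v⊗v) : ∇_x w ] dx dt = 0, all integrals being absolutely convergent. -/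
open MeasureTheory

/-- Spatial divergence `div_x w` of a time-dependent field `w(x,t)`, at the point
`p = (x,t)`. -/
noncomputable def divx (w : (ℝ × ℝ) × ℝ → ℝ × ℝ) (p : (ℝ × ℝ) × ℝ) : ℝ :=
  fderiv ℝ (fun y => (w (y, p.2)).1) p.1 (1, 0)
    + fderiv ℝ (fun y => (w (y, p.2)).2) p.1 (0, 1)

/-- The integrand `v·∂_t w + (v⊗v) : ∇_x w` of the weak form of the Euler momentum
equation, at the point `p = (x,t)`. -/
noncomputable def eulerForm (v w : (ℝ × ℝ) × ℝ → ℝ × ℝ) (p : (ℝ × ℝ) × ℝ) : ℝ :=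
  (v p).1 * deriv (fun s => (w (p.1, s)).1) p.2
    + (v p).2 * deriv (fun s => (w (p.1, s)).2) p.2
    + (v p).1 * (v p).1 * fderiv ℝ (fun y => (w (y, p.2)).1) p.1 (1, 0)
    + (v p).1 * (v p).2 * fderiv ℝ (fun y => (w (y, p.2)).1) p.1 (0, 1)
    + (v p).2 * (v p).1 * fderiv ℝ (fun y => (w (y, p.2)).2) p.1 (1, 0)
    + (v p).2 * (v p).2 * fderiv ℝ (fun y => (w (y, p.2)).2) p.1 (0, 1)

/-!
The growth bound gives `|v|² / |x| ≲ |x|^(1 - 2/μ)`, which is locally integrable on the plane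
exactly when `μ > 2/3`. Test fields vanishing near the spatial origin are
handled by integration by parts on the slab `t > δ`. A general solenoidal field `w = ∇^⊥ψ`, with
`ψ(0, t) = 0`, is replaced by `w_ε = ∇^⊥((1 - η(x/ε)) ψ)`. Since `|ψ| ≲ |x|`, the two factors of
`ψ ∇η(x/ε) / ε` balance and `|w_ε| ≲ 1`, `|Dw_ε| ≲ 1 / |x|` uniformly in `ε`. Hence
`|v|² |Dw_ε|` is dominated by `|v|² / |x|`, and `ε = δ → 0` follows by dominated convergence.
-/

open Set Filter Topology

section Slices

variable {E F G : Type*} [NormedAddCommGroup E] [NormedSpace ℝ E] [NormedAddCommGroup F]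
  [NormedSpace ℝ F] [NormedAddCommGroup G] [NormedSpace ℝ G]

lemma fderiv_slice_left {f : E × F → G} {p : E × F} (hf : DifferentiableAt ℝ f p) (e : E) :
    fderiv ℝ (fun y => f (y, p.2)) p.1 e = fderiv ℝ f p (e, 0) :=
  congr($((HasFDerivAt.comp (f := fun y => (y, p.2)) (g := f) p.1 hf.hasFDerivAt
    (hasFDerivAt_prodMk_left p.1 p.2)).fderiv) e)

lemma deriv_slice_right {f : E × ℝ → G} {p : E × ℝ} (hf : DifferentiableAt ℝ f p) :
    deriv (fun s => f (p.1, s)) p.2 = fderiv ℝ f p (0, 1) :=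
  (hf.hasFDerivAt.comp_hasDerivAt p.2
    ((hasDerivAt_const p.2 p.1).prodMk (hasDerivAt_id p.2))).deriv

end Slices

/-- Space-time `ℝ² × ℝ`; its points are `p = (x, t)`. -/
abbrev Spacetime := (ℝ × ℝ) × ℝ

/-- The domain `(ℝ² ∖ {0}) × (0, ∞)` on which the Euler equations hold classically. -/
def puncturedHalfSpace : Set Spacetime := {p | p.1 ≠ 0 ∧ 0 < p.2}

lemma isOpen_puncturedHalfSpace : IsOpen puncturedHalfSpace :=
  (isOpen_ne_fun continuous_fst continuous_const).inter
    (isOpen_lt continuous_const continuous_snd)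

/-- The Euclidean inner product of the plane; the norm of `ℝ × ℝ` is the sup norm, so Mathlib's
`inner` is not available there. -/
def dot (a b : ℝ × ℝ) : ℝ := a.1 * b.1 + a.2 * b.2

lemma abs_dot_le (a b : ℝ × ℝ) : |dot a b| ≤ 2 * (‖a‖ * ‖b‖) := by
  have h₁ : |a.1 * b.1| ≤ ‖a‖ * ‖b‖ := by
    rw [abs_mul]; exact mul_le_mul (norm_fst_le a) (norm_fst_le b) (abs_nonneg _) (norm_nonneg a)
  have h₂ : |a.2 * b.2| ≤ ‖a‖ * ‖b‖ := by
    rw [abs_mul]; exact mul_le_mul (norm_snd_le a) (norm_snd_le b) (abs_nonneg _) (norm_nonneg a)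
  calc |dot a b| ≤ |a.1 * b.1| + |a.2 * b.2| := abs_add_le _ _
    _ ≤ 2 * (‖a‖ * ‖b‖) := by linarith

lemma contDiff_dot : ContDiff ℝ 1 fun z : (ℝ × ℝ) × (ℝ × ℝ) => dot z.1 z.2 := by
  unfold dot; fun_prop

lemma fderiv_dot {E : Type*} [NormedAddCommGroup E] [NormedSpace ℝ E] {v w : E → ℝ × ℝ} {p : E}
    (hv : DifferentiableAt ℝ v p) (hw : DifferentiableAt ℝ w p) (e : E) :
    fderiv ℝ (fun q => dot (v q) (w q)) p e =
      dot (fderiv ℝ v p e) (w p) + dot (v p) (fderiv ℝ w p e) := by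
  have h := (hv.hasFDerivAt.fst.mul hw.hasFDerivAt.fst).add
    (hv.hasFDerivAt.snd.mul hw.hasFDerivAt.snd)
  have h' : fderiv ℝ (fun q => dot (v q) (w q)) p = _ := h.fderiv
  rw [h']
  simp only [dot, add_apply, smul_apply, ContinuousLinearMap.comp_apply,
    ContinuousLinearMap.coe_fst', ContinuousLinearMap.coe_snd', smul_eq_mul]
  ring

section Pointwise

variable {v w : Spacetime → ℝ × ℝ} {p : Spacetime}

lemma divx_eq_fderiv_fst_add_fderiv_snd (hw : DifferentiableAt ℝ w p) :
    divx w p = fderiv ℝ (fun q => (w q).1) p ((1, 0), 0) +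
      fderiv ℝ (fun q => (w q).2) p ((0, 1), 0) := by
  rw [← fderiv_slice_left hw.fst, ← fderiv_slice_left hw.snd, divx]

lemma divx_eq_fderiv (hw : DifferentiableAt ℝ w p) :
    divx w p = (fderiv ℝ w p ((1, 0), 0)).1 + (fderiv ℝ w p ((0, 1), 0)).2 := by
  rw [divx_eq_fderiv_fst_add_fderiv_snd hw, fderiv.fst hw, fderiv.snd hw]
  rfl

lemma divx_add (hv : DifferentiableAt ℝ v p) (hw : DifferentiableAt ℝ w p) :
    divx (fun q => v q + w q) p = divx v p + divx w p := by
  rw [divx_eq_fderiv (hv.fun_add hw), divx_eq_fderiv hv, divx_eq_fderiv hw, fderiv_fun_add hv hw]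
  simp only [add_apply, Prod.fst_add, Prod.snd_add]
  ring

lemma divx_sub (hv : DifferentiableAt ℝ v p) (hw : DifferentiableAt ℝ w p) :
    divx (fun q => v q - w q) p = divx v p - divx w p := by
  rw [divx_eq_fderiv (hv.fun_sub hw), divx_eq_fderiv hv, divx_eq_fderiv hw, fderiv_fun_sub hv hw]
  simp only [sub_apply, Prod.fst_sub, Prod.snd_sub]
  ring

lemma divx_smul {f : Spacetime → ℝ} (hf : DifferentiableAt ℝ f p) (hw : DifferentiableAt ℝ w p) :
    divx (fun q => f q • w q) p = f p * divx w p + fderiv ℝ f p (w p, 0) := by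
  have hsplit : ((w p, 0) : Spacetime) = (w p).1 • ((1, 0), 0) + (w p).2 • ((0, 1), 0) := by simp
  rw [divx_eq_fderiv (hf.fun_smul hw), divx_eq_fderiv hw, fderiv_fun_smul hf hw, hsplit, map_add,
    map_smul, map_smul]
  simp only [add_apply, smul_apply, ContinuousLinearMap.smulRight_apply, Prod.fst_add,
    Prod.snd_add, Prod.smul_fst, Prod.smul_snd, smul_eq_mul]
  ring

lemma eulerForm_eq_dot_fderiv (v : Spacetime → ℝ × ℝ) (hw : DifferentiableAt ℝ w p) :
    eulerForm v w p = dot (v p) (fderiv ℝ w p (v p, 1)) := by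
  have hsplit : ((v p, 1) : Spacetime) =
      (v p).1 • ((1, 0), 0) + (v p).2 • ((0, 1), 0) + (0, 1) := by simp
  unfold eulerForm
  rw [fderiv_slice_left hw.fst, fderiv_slice_left hw.fst, fderiv_slice_left hw.snd,
    fderiv_slice_left hw.snd, deriv_slice_right hw.fst, deriv_slice_right hw.snd, fderiv.fst hw,
    fderiv.snd hw, hsplit, map_add, map_add, map_smul, map_smul]
  simp only [dot, ContinuousLinearMap.comp_apply, ContinuousLinearMap.coe_fst',
    ContinuousLinearMap.coe_snd', Prod.fst_add, Prod.snd_add, Prod.smul_fst, Prod.smul_snd,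
    smul_eq_mul]
  ring

lemma abs_eulerForm_le (v : Spacetime → ℝ × ℝ) (hw : DifferentiableAt ℝ w p) :
    |eulerForm v w p| ≤ 2 * ‖fderiv ℝ w p‖ * (2 * ‖v p‖ ^ 2 + 1) := by
  have hv1 : ‖((v p, 1) : Spacetime)‖ ≤ ‖v p‖ + 1 := by
    rw [Prod.norm_mk, norm_one]
    exact max_le (by linarith) (by linarith [norm_nonneg (v p)])
  calc |eulerForm v w p| ≤ 2 * (‖v p‖ * ‖fderiv ℝ w p (v p, 1)‖) := by
        rw [eulerForm_eq_dot_fderiv v hw]; exact abs_dot_le _ _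
    _ ≤ 2 * (‖v p‖ * (‖fderiv ℝ w p‖ * (‖v p‖ + 1))) := by
        gcongr; exact (fderiv ℝ w p).le_of_opNorm_le_of_le le_rfl hv1
    _ = 2 * ‖fderiv ℝ w p‖ * (‖v p‖ ^ 2 + ‖v p‖) := by ring
    _ ≤ 2 * ‖fderiv ℝ w p‖ * (2 * ‖v p‖ ^ 2 + 1) := by
        gcongr ?_ * ?_; nlinarith [sq_nonneg (‖v p‖ - 1)]

/-- Tested against solenoidal `w`, the Euler equations take conservation form: the Euler integrand
is the space-time divergence of `((v·w) v + π w, v·w)`. -/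
lemma eulerForm_eq_fderiv_add_divx {π : Spacetime → ℝ} (hv : DifferentiableAt ℝ v p)
    (hπ : DifferentiableAt ℝ π p) (hw : DifferentiableAt ℝ w p) (hdv : divx v p = 0)
    (hdw : divx w p = 0) (hmom : ∀ e, dot (fderiv ℝ v p (v p, 1)) e + fderiv ℝ π p (e, 0) = 0) :
    eulerForm v w p = fderiv ℝ (fun q => dot (v q) (w q)) p (0, 1) +
      divx (fun q => dot (v q) (w q) • v q + π q • w q) p := by
  have hvw : DifferentiableAt ℝ (fun q => dot (v q) (w q)) p :=
    (contDiff_dot.differentiable one_ne_zero).differentiableAt.comp p (hv.prodMk hw)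
  have hadd : fderiv ℝ (fun q => dot (v q) (w q)) p (v p, 1) =
      fderiv ℝ (fun q => dot (v q) (w q)) p (0, 1) +
        fderiv ℝ (fun q => dot (v q) (w q)) p (v p, 0) := by
    rw [← map_add]; simp
  rw [divx_add (hvw.fun_smul hv) (hπ.fun_smul hw), divx_smul hvw hv, divx_smul hπ hw, hdv, hdw,
    eulerForm_eq_dot_fderiv v hw]
  linear_combination -hmom (w p) - fderiv_dot hv hw (v p, 1) + hadd

end Pointwise

/-- A classical solution `(v, π)` of the incompressible Euler equations on
`(ℝ² ∖ {0}) × (0, ∞)`. The momentum equation is stated without coordinates: `Dv(v, 1)` is the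
material derivative `∂ₜv + (v·∇)v`, and it is tested against every spatial direction. -/
structure IsPuncturedEulerSolution (v : Spacetime → ℝ × ℝ) (π : Spacetime → ℝ) : Prop where
  contDiffOn_velocity : ContDiffOn ℝ 1 v puncturedHalfSpace
  contDiffOn_pressure : ContDiffOn ℝ 1 π puncturedHalfSpace
  divx_eq_zero : ∀ p ∈ puncturedHalfSpace, divx v p = 0
  momentum : ∀ p ∈ puncturedHalfSpace, ∀ e,
    dot (fderiv ℝ v p (v p, 1)) e + fderiv ℝ π p (e, 0) = 0

section SlabIntegration

lemma isOpen_setOf_lt_snd {X : Type*} [TopologicalSpace X] (a : ℝ) :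
    IsOpen {p : X × ℝ | a < p.2} :=
  isOpen_lt continuous_const continuous_snd

lemma restrict_slab_prod {X : Type*} [MeasurableSpace X] (μ : Measure X) [SFinite μ] (δ : ℝ) :
    (μ.prod volume).restrict {p : X × ℝ | δ < p.2} = μ.prod (volume.restrict (Ioi δ)) := by
  have hslab : {p : X × ℝ | δ < p.2} = univ ×ˢ Ioi δ := by ext; simp
  rw [hslab, ← Measure.prod_restrict, Measure.restrict_univ]

lemma hasCompactSupport_slice_left {X Y M : Type*} [TopologicalSpace X] [R1Space X]
    [TopologicalSpace Y] [Zero M] {f : X × Y → M} (hf : HasCompactSupport f) (y : Y) :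
    HasCompactSupport fun x => f (x, y) :=
  .intro (hf.isCompact.image continuous_fst) fun _ hx =>
    image_eq_zero_of_notMem_tsupport fun h => hx ⟨_, h, rfl⟩

lemma hasCompactSupport_slice_right {X Y M : Type*} [TopologicalSpace X] [TopologicalSpace Y]
    [R1Space Y] [Zero M] {f : X × Y → M} (hf : HasCompactSupport f) (x : X) :
    HasCompactSupport fun y => f (x, y) :=
  .intro (hf.isCompact.image continuous_snd) fun _ hy =>
    image_eq_zero_of_notMem_tsupport fun h => hy ⟨_, h, rfl⟩

lemma integrableOn_slab_of_hasCompactSupport {X F : Type*} [TopologicalSpace X] [T2Space X]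
    [MeasurableSpace X] [BorelSpace X] [NormedAddCommGroup F]
    {μ : Measure (X × ℝ)} [IsFiniteMeasureOnCompacts μ] {f : X × ℝ → F} {a δ : ℝ} (ha : a < δ)
    (hf : ContinuousOn f {p | a < p.2}) (hc : HasCompactSupport f) :
    IntegrableOn f {p | δ < p.2} μ := by
  have hK : IsCompact (tsupport f ∩ {p : X × ℝ | δ ≤ p.2}) :=
    hc.inter_right (isClosed_le continuous_const continuous_snd)
  refine ((hf.mono fun p hp => ha.trans_le hp.2).integrableOn_compact hK).of_forall_sdiff_eq_zero
    (isOpen_setOf_lt_snd δ).measurableSet ?_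
  rintro p ⟨hδ : δ < p.2, hK⟩
  exact image_eq_zero_of_notMem_tsupport fun h => hK ⟨h, hδ.le⟩

variable {E F : Type*} [NormedAddCommGroup E] [NormedSpace ℝ E] [NormedAddCommGroup F]
  [NormedSpace ℝ F] {f : E × ℝ → F} {a δ : ℝ}

lemma continuousOn_fderiv_apply {U : Set E} {f : E → F} (hU : IsOpen U) (hf : ContDiffOn ℝ 1 f U)
    (e : E) : ContinuousOn (fun p => fderiv ℝ f p e) U :=
  (hf.continuousOn_fderiv_of_isOpen hU le_rfl).clm_apply continuousOn_const

lemma integrableOn_slab_fderiv_apply [MeasurableSpace E] [BorelSpace E]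
    {μ : Measure (E × ℝ)} [IsFiniteMeasureOnCompacts μ] (ha : a < δ)
    (hf : ContDiffOn ℝ 1 f {p | a < p.2}) (hc : HasCompactSupport f) (e : E × ℝ) :
    IntegrableOn (fun p => fderiv ℝ f p e) {p | δ < p.2} μ :=
  integrableOn_slab_of_hasCompactSupport ha
    (continuousOn_fderiv_apply (isOpen_setOf_lt_snd a) hf e) (hc.fderiv_apply ℝ e)

variable [FiniteDimensional ℝ E] [MeasurableSpace E] [BorelSpace E]
  (μ : Measure E) [μ.IsAddHaarMeasure]

lemma integral_fderiv_eq_zero_of_hasCompactSupport {g : E → F} (hg : ContDiff ℝ 1 g)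
    (hc : HasCompactSupport g) (e : E) : ∫ x, fderiv ℝ g x e ∂μ = 0 := by
  have hint : Integrable (fun x => fderiv ℝ g x e) μ :=
    ((hg.continuous_fderiv one_ne_zero).clm_apply
      continuous_const).integrable_of_hasCompactSupport (hc.fderiv_apply ℝ e)
  have h := integral_smul_fderiv_eq_neg_fderiv_smul_of_integrable (μ := μ)
    (f := fun _ : E => (1 : ℝ)) (g := g) (v := e) (by simp) (by simpa using hint)
    (by simpa using hg.continuous.integrable_of_hasCompactSupport hc)
    (fun _ _ => differentiableAt_const _) fun x _ => hg.differentiable one_ne_zero x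
  simpa using h

lemma setIntegral_slab_fderiv_left (ha : a < δ) (hf : ContDiffOn ℝ 1 f {p | a < p.2})
    (hc : HasCompactSupport f) (e : E) :
    ∫ p in {p : E × ℝ | δ < p.2}, fderiv ℝ f p (e, 0) ∂(μ.prod volume) = 0 := by
  have hint := integrableOn_slab_fderiv_apply (μ := μ.prod volume) ha hf hc (e, 0)
  rw [IntegrableOn, restrict_slab_prod] at hint
  rw [restrict_slab_prod, integral_prod_symm _ hint]
  refine setIntegral_eq_zero_of_forall_eq_zero fun t (ht : δ < t) => ?_
  have hat (x : E) : ContDiffAt ℝ 1 f (x, t) :=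
    hf.contDiffAt ((isOpen_setOf_lt_snd a).mem_nhds (ha.trans ht))
  have hslice : ContDiff ℝ 1 fun x => f (x, t) := contDiff_iff_contDiffAt.2 fun x =>
    (hat x).comp x (contDiffAt_id.prodMk contDiffAt_const)
  rw [← integral_fderiv_eq_zero_of_hasCompactSupport μ hslice
    (hasCompactSupport_slice_left hc t) e]
  exact integral_congr_ae <| .of_forall fun x =>
    (fderiv_slice_left ((hat x).differentiableAt one_ne_zero) e).symm

lemma setIntegral_slab_fderiv_right [CompleteSpace F] (ha : a < δ)
    (hf : ContDiffOn ℝ 1 f {p | a < p.2}) (hc : HasCompactSupport f) :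
    ∫ p in {p : E × ℝ | δ < p.2}, fderiv ℝ f p (0, 1) ∂(μ.prod volume) =
      -∫ x, f (x, δ) ∂μ := by
  have hint := integrableOn_slab_fderiv_apply (μ := μ.prod volume) ha hf hc (0, 1)
  rw [IntegrableOn, restrict_slab_prod] at hint
  rw [restrict_slab_prod, integral_prod _ hint, ← integral_neg]
  refine integral_congr_ae ?_
  filter_upwards [hint.prod_right_ae] with x hx
  have hderiv : ∀ t ∈ Ici δ, HasDerivAt (fun s => f (x, s)) (fderiv ℝ f (x, t) (0, 1)) t :=
    fun t (ht : δ ≤ t) =>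
      ((hf.differentiableOn one_ne_zero).differentiableAt
        ((isOpen_setOf_lt_snd a).mem_nhds (ha.trans_le ht))).hasFDerivAt.comp_hasDerivAt t
          ((hasDerivAt_const t x).prodMk (hasDerivAt_id t))
  have hlim : Tendsto (fun s => f (x, s)) atTop (𝓝 0) :=
    (hasCompactSupport_slice_right hc x).is_zero_at_infty.mono_left atTop_le_cocompact
  rw [integral_Ioi_of_hasDerivAt_of_tendsto' hderiv hx hlim, zero_sub]

end SlabIntegration

section Divergence

variable {G : Spacetime → ℝ × ℝ} {a δ : ℝ}

lemma divx_eqOn_slab (ha : a < δ) (hG : ContDiffOn ℝ 1 G {p | a < p.2}) :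
    EqOn (divx G) (fun p => fderiv ℝ (fun q => (G q).1) p ((1, 0), 0) +
      fderiv ℝ (fun q => (G q).2) p ((0, 1), 0)) {p | δ < p.2} := fun _ hp =>
  divx_eq_fderiv_fst_add_fderiv_snd <| (hG.differentiableOn one_ne_zero).differentiableAt <|
    (isOpen_setOf_lt_snd a).mem_nhds (ha.trans hp)

lemma integrableOn_slab_divx (ha : a < δ) (hG : ContDiffOn ℝ 1 G {p | a < p.2})
    (hc : HasCompactSupport G) : IntegrableOn (divx G) {p : Spacetime | δ < p.2} := by
  rw [integrableOn_congr_fun (divx_eqOn_slab ha hG) (isOpen_setOf_lt_snd δ).measurableSet]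
  exact (integrableOn_slab_fderiv_apply ha hG.fst (hc.comp_left (g := Prod.fst) rfl) _).add
    (integrableOn_slab_fderiv_apply ha hG.snd (hc.comp_left (g := Prod.snd) rfl) _)

lemma setIntegral_slab_divx (ha : a < δ) (hG : ContDiffOn ℝ 1 G {p | a < p.2})
    (hc : HasCompactSupport G) : ∫ p in {p : Spacetime | δ < p.2}, divx G p = 0 := by
  have hc₁ : HasCompactSupport fun p => (G p).1 := hc.comp_left (g := Prod.fst) rfl
  have hc₂ : HasCompactSupport fun p => (G p).2 := hc.comp_left (g := Prod.snd) rfl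
  rw [setIntegral_congr_fun (isOpen_setOf_lt_snd δ).measurableSet (divx_eqOn_slab ha hG),
    integral_add (integrableOn_slab_fderiv_apply ha hG.fst hc₁ _)
      (integrableOn_slab_fderiv_apply ha hG.snd hc₂ _), Measure.volume_eq_prod,
    setIntegral_slab_fderiv_left _ ha hG.fst hc₁, setIntegral_slab_fderiv_left _ ha hG.snd hc₂,
    add_zero]

end Divergence

lemma contDiffOn_of_puncturedHalfSpace {F : Type*} [NormedAddCommGroup F] [NormedSpace ℝ F]
    {f : Spacetime → F} {ε : ℝ} (hε : 0 < ε) (hf : ContDiffOn ℝ 1 f puncturedHalfSpace)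
    (h0 : ∀ p : Spacetime, ‖p.1‖ < ε → f p = 0) : ContDiffOn ℝ 1 f {p | 0 < p.2} := by
  refine fun p hp => ContDiffAt.contDiffWithinAt ?_
  by_cases hx : p.1 = 0
  · have hnhds : ∀ᶠ q : Spacetime in 𝓝 p, ‖q.1‖ < ε :=
      continuousAt_fst.norm.eventually_lt_const (by simpa [hx] using hε)
    exact contDiffAt_const.congr_of_eventuallyEq (hnhds.mono h0)
  · exact hf.contDiffAt (isOpen_puncturedHalfSpace.mem_nhds ⟨hx, hp⟩)

lemma ae_fst_ne_zero : ∀ᵐ p : Spacetime, p.1 ≠ 0 :=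
  Measure.quasiMeasurePreserving_fst.ae (Measure.ae_ne volume 0)

namespace IsPuncturedEulerSolution

variable {v : Spacetime → ℝ × ℝ} {π : Spacetime → ℝ}

lemma differentiableAt_velocity (h : IsPuncturedEulerSolution v π) {p : Spacetime}
    (hp : p ∈ puncturedHalfSpace) : DifferentiableAt ℝ v p :=
  (h.contDiffOn_velocity.differentiableOn one_ne_zero).differentiableAt
    (isOpen_puncturedHalfSpace.mem_nhds hp)

lemma differentiableAt_pressure (h : IsPuncturedEulerSolution v π) {p : Spacetime}
    (hp : p ∈ puncturedHalfSpace) : DifferentiableAt ℝ π p :=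
  (h.contDiffOn_pressure.differentiableOn one_ne_zero).differentiableAt
    (isOpen_puncturedHalfSpace.mem_nhds hp)

lemma of_coordinates (hv : ContDiffOn ℝ 1 v puncturedHalfSpace)
    (hπ : ContDiffOn ℝ 1 π puncturedHalfSpace)
    (hdiv : ∀ x, x ≠ 0 → ∀ t : ℝ, 0 < t → divx v (x, t) = 0)
    (hmom₁ : ∀ x, x ≠ 0 → ∀ t : ℝ, 0 < t →
      deriv (fun s => (v (x, s)).1) t
          + (v (x, t)).1 * fderiv ℝ (fun y => (v (y, t)).1) x (1, 0)
          + (v (x, t)).2 * fderiv ℝ (fun y => (v (y, t)).1) x (0, 1)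
          + fderiv ℝ (fun y => π (y, t)) x (1, 0) = 0)
    (hmom₂ : ∀ x, x ≠ 0 → ∀ t : ℝ, 0 < t →
      deriv (fun s => (v (x, s)).2) t
          + (v (x, t)).1 * fderiv ℝ (fun y => (v (y, t)).2) x (1, 0)
          + (v (x, t)).2 * fderiv ℝ (fun y => (v (y, t)).2) x (0, 1)
          + fderiv ℝ (fun y => π (y, t)) x (0, 1) = 0) :
    IsPuncturedEulerSolution v π where
  contDiffOn_velocity := hv
  contDiffOn_pressure := hπ
  divx_eq_zero p hp := hdiv p.1 hp.1 p.2 hp.2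
  momentum p hp e := by
    have hp' := isOpen_puncturedHalfSpace.mem_nhds hp
    have hdv := (hv.differentiableOn one_ne_zero).differentiableAt hp'
    have hdπ := (hπ.differentiableOn one_ne_zero).differentiableAt hp'
    have h₁ := hmom₁ p.1 hp.1 p.2 hp.2
    have h₂ := hmom₂ p.1 hp.1 p.2 hp.2
    rw [deriv_slice_right hdv.fst, fderiv_slice_left hdv.fst, fderiv_slice_left hdv.fst,
      fderiv_slice_left hdπ, fderiv.fst hdv] at h₁
    rw [deriv_slice_right hdv.snd, fderiv_slice_left hdv.snd, fderiv_slice_left hdv.snd,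
      fderiv_slice_left hdπ, fderiv.snd hdv] at h₂
    have hv1 : ((v p, 1) : Spacetime) =
        (v p).1 • ((1, 0), 0) + (v p).2 • ((0, 1), 0) + (0, 1) := by simp
    have he : ((e, 0) : Spacetime) = e.1 • ((1, 0), 0) + e.2 • ((0, 1), 0) := by simp
    rw [hv1, he]
    simp only [dot, map_add, map_smul, ContinuousLinearMap.comp_apply, smul_eq_mul,
      ContinuousLinearMap.coe_fst', ContinuousLinearMap.coe_snd', Prod.mk.eta, Prod.fst_add,
      Prod.snd_add, Prod.smul_fst, Prod.smul_snd] at h₁ h₂ ⊢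
    linear_combination e.1 * h₁ + e.2 * h₂

variable {w : Spacetime → ℝ × ℝ}

lemma setIntegral_slab_eulerForm (h : IsPuncturedEulerSolution v π) (hw : ContDiff ℝ 1 w)
    (hc : HasCompactSupport w) (hdiv : ∀ p : Spacetime, 0 < p.2 → divx w p = 0) {ε : ℝ}
    (hε : 0 < ε) (h0 : ∀ p : Spacetime, ‖p.1‖ < ε → w p = 0) {δ : ℝ} (hδ : 0 < δ) :
    ∫ p in {p : Spacetime | δ < p.2}, eulerForm v w p = -∫ x, dot (v (x, δ)) (w (x, δ)) := by
  set f : Spacetime → ℝ := fun p => dot (v p) (w p) with hf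
  set G : Spacetime → ℝ × ℝ := fun p => f p • v p + π p • w p with hG
  have hf0 {p : Spacetime} (hp : w p = 0) : f p = 0 := by simp [hf, dot, hp]
  have hG0 {p : Spacetime} (hp : w p = 0) : G p = 0 := by simp [hG, hf0 hp, hp]
  have hfc : HasCompactSupport f := hc.mono fun p hp hwp => hp (hf0 hwp)
  have hGc : HasCompactSupport G := hc.mono fun p hp hwp => hp (hG0 hwp)
  have hfU : ContDiffOn ℝ 1 f puncturedHalfSpace :=
    contDiff_dot.comp_contDiffOn (h.contDiffOn_velocity.prodMk hw.contDiffOn)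
  have hGU : ContDiffOn ℝ 1 G puncturedHalfSpace :=
    (hfU.smul h.contDiffOn_velocity).add (h.contDiffOn_pressure.smul hw.contDiffOn)
  have hf1 := contDiffOn_of_puncturedHalfSpace hε hfU fun p hp => hf0 (h0 p hp)
  have hG1 := contDiffOn_of_puncturedHalfSpace hε hGU fun p hp => hG0 (h0 p hp)
  have hpt : ∀ᵐ p ∂volume.restrict {p : Spacetime | δ < p.2},
      eulerForm v w p = fderiv ℝ f p (0, 1) + divx G p := by
    filter_upwards [ae_restrict_mem (isOpen_setOf_lt_snd δ).measurableSet,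
      ae_restrict_of_ae ae_fst_ne_zero] with p hpδ hp0
    have hp : p ∈ puncturedHalfSpace := ⟨hp0, hδ.trans hpδ⟩
    exact eulerForm_eq_fderiv_add_divx (h.differentiableAt_velocity hp)
      (h.differentiableAt_pressure hp) (hw.differentiable one_ne_zero p) (h.divx_eq_zero p hp)
      (hdiv p hp.2) (h.momentum p hp)
  rw [integral_congr_ae hpt, integral_add (integrableOn_slab_fderiv_apply hδ hf1 hfc _)
    (integrableOn_slab_divx hδ hG1 hGc), setIntegral_slab_divx hδ hG1 hGc, add_zero]
  exact setIntegral_slab_fderiv_right volume hδ hf1 hfc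

end IsPuncturedEulerSolution

section ParametricIntegral

variable {E F : Type*} [NormedAddCommGroup E] [NormedSpace ℝ E] [ProperSpace E]
  [NormedAddCommGroup F] [NormedSpace ℝ F] {g : E × ℝ → F}

lemma hasFDerivAt_parametric_intervalIntegral (hg : ContDiff ℝ 1 g) (a b : ℝ) (x : E) :
    HasFDerivAt (fun y => ∫ s in a..b, g (y, s))
      (∫ s in a..b, (fderiv ℝ g (x, s)).comp (.inl ℝ E ℝ)) x := by
  have hD : Continuous fun q => (fderiv ℝ g q).comp (.inl ℝ E ℝ) :=
    (hg.continuous_fderiv one_ne_zero).clm_comp continuous_const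
  obtain ⟨C, hC⟩ := ((isCompact_closedBall x 1).prod
    (isCompact_uIcc (a := a) (b := b))).exists_bound_of_continuousOn hD.continuousOn
  refine intervalIntegral.hasFDerivAt_integral_of_dominated_of_fderiv_le
    (F := fun y s => g (y, s)) (F' := fun y s => (fderiv ℝ g (y, s)).comp (.inl ℝ E ℝ))
    (bound := fun _ => C) (Metric.closedBall_mem_nhds x one_pos)
    (.of_forall fun y => (hg.continuous.comp (by fun_prop)).aestronglyMeasurable)
    ((hg.continuous.comp (by fun_prop)).intervalIntegrable _ _)
    (hD.comp (by fun_prop)).aestronglyMeasurable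
    (.of_forall fun s hs y hy => hC _ ⟨hy, uIoc_subset_uIcc hs⟩)
    intervalIntegrable_const (.of_forall fun s _ y _ => ?_)
  exact (hg.differentiable one_ne_zero (y, s)).hasFDerivAt.comp y (hasFDerivAt_prodMk_left y s)

lemma contDiff_parametric_intervalIntegral (hg : ContDiff ℝ 1 g) (a b : ℝ) :
    ContDiff ℝ 1 fun x => ∫ s in a..b, g (x, s) := by
  have hD : Continuous fun q => (fderiv ℝ g q).comp (.inl ℝ E ℝ) :=
    (hg.continuous_fderiv one_ne_zero).clm_comp continuous_const
  rw [contDiff_one_iff_fderiv]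
  refine ⟨fun x => (hasFDerivAt_parametric_intervalIntegral hg a b x).differentiableAt, ?_⟩
  rw [funext fun x => (hasFDerivAt_parametric_intervalIntegral hg a b x).fderiv]
  exact intervalIntegral.continuous_parametric_intervalIntegral_of_continuous' (by exact hD) a b

end ParametricIntegral

section StreamFunction

/-- The linear form `e ↦ a₂e₁ - a₁e₂` on the plane, measuring the flux of `a` across `e`. A planar
field `u` has divergence zero if and only if the `1`-form `x ↦ fluxForm (u x)` is closed. -/
noncomputable def fluxForm : ℝ × ℝ →L[ℝ] ℝ × ℝ →L[ℝ] ℝ :=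
  (ContinuousLinearMap.snd ℝ ℝ ℝ).smulRight (ContinuousLinearMap.fst ℝ ℝ ℝ) -
    (ContinuousLinearMap.fst ℝ ℝ ℝ).smulRight (ContinuousLinearMap.snd ℝ ℝ ℝ)

lemma fluxForm_apply (a e : ℝ × ℝ) : fluxForm a e = a.2 * e.1 - a.1 * e.2 := by
  simp [fluxForm]

lemma fluxForm_map_comm {A : ℝ × ℝ →L[ℝ] ℝ × ℝ} (hA : (A (1, 0)).1 + (A (0, 1)).2 = 0)
    (x y : ℝ × ℝ) : fluxForm (A x) y = fluxForm (A y) x := by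
  have hAz (z : ℝ × ℝ) : A z = z.1 • A (1, 0) + z.2 • A (0, 1) := by
    rw [← map_smul, ← map_smul, ← map_add]; simp
  rw [hAz x, hAz y]
  simp only [fluxForm_apply, Prod.fst_add, Prod.snd_add, Prod.smul_fst, Prod.smul_snd, smul_eq_mul]
  linear_combination (x.2 * y.1 - x.1 * y.2) * hA

lemma norm_fluxForm_le (a : ℝ × ℝ) : ‖fluxForm a‖ ≤ 2 * ‖a‖ := by
  refine (fluxForm a).opNorm_le_bound (by positivity) fun e => ?_
  have h := abs_dot_le (a.2, -a.1) e
  rw [fluxForm_apply, Real.norm_eq_abs]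
  simpa only [dot, Prod.norm_def, norm_neg, max_comm ‖a.2‖, neg_mul, ← sub_eq_add_neg,
    mul_assoc] using h

/-- The stream function of a time-dependent planar field `w`, normalised to vanish at the spatial
origin: at time `t` it is the primitive of the `1`-form `y ↦ fluxForm (w (y, t))`. -/
noncomputable def streamFunction (w : Spacetime → ℝ × ℝ) (p : Spacetime) : ℝ :=
  ∫ᶜ y in .segment 0 p.1, fluxForm (w (y, p.2))

variable {w : Spacetime → ℝ × ℝ}

lemma contDiff_streamFunction (hw : ContDiff ℝ 1 w) : ContDiff ℝ 1 (streamFunction w) := by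
  have hψ : streamFunction w =
      fun p => ∫ s in (0 : ℝ)..1, fluxForm (w (s • p.1, p.2)) p.1 := by
    funext p
    simp [streamFunction, curveIntegral_segment, AffineMap.lineMap_apply]
  rw [hψ]
  exact contDiff_parametric_intervalIntegral (g := fun q : Spacetime × ℝ =>
    fluxForm (w (q.2 • q.1.1, q.1.2)) q.1.1) (by fun_prop) 0 1

lemma fderiv_streamFunction_left (hw : ContDiff ℝ 1 w) {p : Spacetime}
    (hdiv : ∀ y, divx w (y, p.2) = 0) (e : ℝ × ℝ) :
    fderiv ℝ (streamFunction w) p (e, 0) = fluxForm (w p) e := by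
  set D : ℝ × ℝ → (ℝ × ℝ →L[ℝ] ℝ × ℝ) := fun y => (fderiv ℝ w (y, p.2)).comp (.inl ℝ (ℝ × ℝ) ℝ)
  have hω (y : ℝ × ℝ) : HasFDerivAt (fun z => fluxForm (w (z, p.2))) (fluxForm.comp (D y)) y :=
    fluxForm.hasFDerivAt.comp y <| HasFDerivAt.comp y (g := w) (f := fun z => (z, p.2))
      (hw.differentiable one_ne_zero _).hasFDerivAt (hasFDerivAt_prodMk_left y p.2)
  have htrace (y : ℝ × ℝ) : (D y (1, 0)).1 + (D y (0, 1)).2 = 0 :=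
    (divx_eq_fderiv (hw.differentiable one_ne_zero _)).symm.trans (hdiv y)
  have hprim := convex_univ.hasFDerivWithinAt_curveIntegral_segment_of_hasFDerivWithinAt_symmetric
    (fun y _ => (hω y).hasFDerivWithinAt)
    (fun y _ a _ b _ => fluxForm_map_comm (htrace y) a b) (mem_univ 0) (mem_univ p.1)
  rw [hasFDerivWithinAt_univ] at hprim
  rw [← fderiv_slice_left ((contDiff_streamFunction hw).differentiable one_ne_zero p)]
  exact congr($(hprim.fderiv) e)

lemma abs_streamFunction_le {p : Spacetime} {M : ℝ} (hM : ∀ y, ‖w (y, p.2)‖ ≤ M) :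
    |streamFunction w p| ≤ 2 * M * ‖p.1‖ := by
  have h := norm_curveIntegral_segment_le (ω := fun y => fluxForm (w (y, p.2))) (a := 0)
    (b := p.1) (C := 2 * M) fun y _ => (norm_fluxForm_le _).trans (by gcongr; exact hM y)
  simpa only [sub_zero] using! h

end StreamFunction

section Cutoff

/-- The rotated gradient `∇^⊥f = (-∂₂f, ∂₁f)` of a function on the plane. -/
noncomputable def perpGrad (f : ℝ × ℝ → ℝ) (x : ℝ × ℝ) : ℝ × ℝ :=
  (-fderiv ℝ f x (0, 1), fderiv ℝ f x (1, 0))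

lemma contDiff_perpGrad {f : ℝ × ℝ → ℝ} (hf : ContDiff ℝ 2 f) : ContDiff ℝ 1 (perpGrad f) :=
  have hD (e : ℝ × ℝ) : ContDiff ℝ 1 fun x => fderiv ℝ f x e :=
    (hf.fderiv_right le_rfl).clm_apply contDiff_const
  (hD _).neg.prodMk (hD _)

lemma hasCompactSupport_perpGrad {f : ℝ × ℝ → ℝ} (hf : HasCompactSupport f) :
    HasCompactSupport (perpGrad f) :=
  (hf.fderiv ℝ).mono fun x hx hfx => hx (by simp [perpGrad, hfx])

lemma fderiv_perpGrad_trace {f : ℝ × ℝ → ℝ} (hf : ContDiff ℝ 2 f) (x : ℝ × ℝ) :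
    (fderiv ℝ (perpGrad f) x (1, 0)).1 + (fderiv ℝ (perpGrad f) x (0, 1)).2 = 0 := by
  have hD : DifferentiableAt ℝ (fderiv ℝ f) x :=
    (hf.fderiv_right (m := 1) le_rfl).differentiable one_ne_zero x
  have hDe (e : ℝ × ℝ) := hD.hasFDerivAt.clm_apply (hasFDerivAt_const e x)
  rw [show fderiv ℝ (perpGrad f) x = _ from ((hDe (0, 1)).neg.prodMk (hDe (1, 0))).fderiv]
  have hsymm := (hf.contDiffAt (x := x)).isSymmSndFDerivAt (by simp) (1, 0) (0, 1)
  simp [hsymm]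

lemma fderiv_comp_smul_fst {E F G : Type*} [NormedAddCommGroup E] [NormedSpace ℝ E]
    [NormedAddCommGroup F] [NormedSpace ℝ F] [NormedAddCommGroup G] [NormedSpace ℝ G] {g : E → G}
    (hg : Differentiable ℝ g) (c : ℝ) (p : E × F) :
    fderiv ℝ (fun q : E × F => g (c • q.1)) p =
      c • (fderiv ℝ g (c • p.1)).comp (.fst ℝ E F) := by
  have h := (hg (c • p.1)).hasFDerivAt.comp p (hasFDerivAt_fst.const_smul c)
  rw [show fderiv ℝ (fun q : E × F => g (c • q.1)) p = _ from h.fderiv,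
    ContinuousLinearMap.comp_smul]

/-- The radial cutoff on the plane, equal to `1` on the unit ball and supported in the ball of
radius `2`. -/
noncomputable def unitBump : ContDiffBump (0 : ℝ × ℝ) := ⟨1, 2, one_pos, one_lt_two⟩

lemma contDiff_unitBump : ContDiff ℝ 2 unitBump := unitBump.contDiff

/-- The solenoidal cutoff `w - ∇^⊥(η(x/ε) ψ)`, where `ψ` is the stream function of `w` and `η` the
unit bump: it removes the ball of radius `ε` from the support of `w` and keeps the divergence. -/
noncomputable def solenoidalCutoff (ε : ℝ) (w : Spacetime → ℝ × ℝ) (p : Spacetime) : ℝ × ℝ :=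
  w p - (unitBump (ε⁻¹ • p.1) • w p +
    streamFunction w p • (ε⁻¹ • perpGrad unitBump (ε⁻¹ • p.1)))

variable {w : Spacetime → ℝ × ℝ} {ε : ℝ} {p : Spacetime}

lemma contDiff_unitBump_comp (ε : ℝ) :
    ContDiff ℝ 1 fun p : Spacetime => unitBump (ε⁻¹ • p.1) :=
  (contDiff_unitBump.of_le one_le_two).comp (by fun_prop)

lemma contDiff_perpGrad_unitBump_comp (ε : ℝ) :
    ContDiff ℝ 1 fun p : Spacetime => ε⁻¹ • perpGrad unitBump (ε⁻¹ • p.1) :=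
  ((contDiff_perpGrad contDiff_unitBump).comp (by fun_prop)).const_smul ε⁻¹

lemma contDiff_solenoidalCutoff (hw : ContDiff ℝ 1 w) (ε : ℝ) :
    ContDiff ℝ 1 (solenoidalCutoff ε w) :=
  hw.sub (((contDiff_unitBump_comp ε).smul hw).add
    ((contDiff_streamFunction hw).smul (contDiff_perpGrad_unitBump_comp ε)))

lemma divx_perpGrad_unitBump_comp (ε : ℝ) (p : Spacetime) :
    divx (fun q => ε⁻¹ • perpGrad unitBump (ε⁻¹ • q.1)) p = 0 := by
  have hP := contDiff_perpGrad contDiff_unitBump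
  have hd : DifferentiableAt ℝ (fun q : Spacetime => perpGrad unitBump (ε⁻¹ • q.1)) p :=
    (hP.differentiable one_ne_zero _).comp p (by fun_prop)
  rw [divx_smul (differentiableAt_const ε⁻¹) hd, divx_eq_fderiv hd,
    fderiv_comp_smul_fst (hP.differentiable one_ne_zero)]
  have htrace := fderiv_perpGrad_trace contDiff_unitBump (ε⁻¹ • p.1)
  simp [← mul_add, htrace]

lemma divx_solenoidalCutoff (hw : ContDiff ℝ 1 w) (hdiv : ∀ y, divx w (y, p.2) = 0) (ε : ℝ) :
    divx (solenoidalCutoff ε w) p = 0 := by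
  have hη := (contDiff_unitBump_comp ε).differentiable one_ne_zero p
  have hP := (contDiff_perpGrad_unitBump_comp ε).differentiable one_ne_zero p
  have hψ := (contDiff_streamFunction hw).differentiable one_ne_zero p
  have hw' := hw.differentiable one_ne_zero p
  have hDη : fderiv ℝ (fun q : Spacetime => unitBump (ε⁻¹ • q.1)) p (w p, 0) =
      ε⁻¹ * fderiv ℝ unitBump (ε⁻¹ • p.1) (w p) := by
    rw [fderiv_comp_smul_fst (contDiff_unitBump.differentiable two_ne_zero)]; rfl
  have hsplit : fderiv ℝ unitBump (ε⁻¹ • p.1) (w p) =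
      (w p).1 * fderiv ℝ unitBump (ε⁻¹ • p.1) (1, 0) +
        (w p).2 * fderiv ℝ unitBump (ε⁻¹ • p.1) (0, 1) := by
    rw [← smul_eq_mul, ← smul_eq_mul, ← map_smul, ← map_smul, ← map_add]; simp
  unfold solenoidalCutoff
  rw [divx_sub hw' ((hη.fun_smul hw').fun_add (hψ.fun_smul hP)),
    divx_add (hη.fun_smul hw') (hψ.fun_smul hP), divx_smul hη hw', divx_smul hψ hP,
    divx_perpGrad_unitBump_comp, hdiv p.1, fderiv_streamFunction_left hw hdiv, hDη, hsplit]
  simp only [fluxForm_apply, perpGrad, Prod.smul_fst, Prod.smul_snd, smul_eq_mul]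
  ring

lemma solenoidalCutoff_of_norm_lt (hε : 0 < ε) (hp : ‖p.1‖ < ε) : solenoidalCutoff ε w p = 0 := by
  have hball : ε⁻¹ • p.1 ∈ Metric.ball (0 : ℝ × ℝ) unitBump.rIn := by
    rw [mem_ball_zero_iff, norm_smul, norm_inv, Real.norm_of_nonneg hε.le, inv_mul_lt_iff₀ hε]
    exact hp.trans_eq (mul_one ε).symm
  have hη := unitBump.eventuallyEq_one_of_mem_ball hball
  have hP : perpGrad unitBump (ε⁻¹ • p.1) = 0 := by
    simp [perpGrad, hη.fderiv_eq]
  simp [solenoidalCutoff, hP, hη.eq_of_nhds]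

lemma solenoidalCutoff_of_lt_norm (hε : 0 < ε) (hp : 2 * ε < ‖p.1‖) :
    solenoidalCutoff ε w p = w p := by
  have hout : ε⁻¹ • p.1 ∉ tsupport unitBump := by
    rw [unitBump.tsupport_eq, mem_closedBall_zero_iff, norm_smul, norm_inv,
      Real.norm_of_nonneg hε.le, inv_mul_le_iff₀ hε, not_le]
    exact (mul_comm ε 2).trans_lt hp
  have hη := notMem_tsupport_iff_eventuallyEq.1 hout
  have hP : perpGrad unitBump (ε⁻¹ • p.1) = 0 := by
    simp [perpGrad, hη.fderiv_eq]
  simp [solenoidalCutoff, hP, hη.eq_of_nhds]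

lemma solenoidalCutoff_eq_zero_of_lt_norm {R : ℝ} (hw : ∀ q : Spacetime, R < ‖q‖ → w q = 0)
    (hε : 0 < ε) (hεR : 2 * ε ≤ R) (hp : R < ‖p‖) : solenoidalCutoff ε w p = 0 := by
  rcases lt_max_iff.1 hp with hx | ht
  · rw [solenoidalCutoff_of_lt_norm hε (hεR.trans_lt hx), hw p hp]
  · have hslice (y : ℝ × ℝ) : w (y, p.2) = 0 := hw _ (ht.trans_le (le_max_right _ _))
    have hψ : streamFunction w p = 0 := abs_nonpos_iff.1 <| by
      simpa using abs_streamFunction_le (p := p) (M := 0) fun y => by simp [hslice y]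
    simp [solenoidalCutoff, hψ, hw p hp]

end Cutoff

section ScaleBound

variable {F : Type*} [NormedAddCommGroup F] [NormedSpace ℝ F] {k l : ℤ} {K L : ℝ}
  {f g : Spacetime → F} {p : Spacetime}

/-- `f` has size at most `K |x|^k` at `p = (x, t)`, and its derivative has the size `K |x|^(k-1)`
expected of a function varying on the spatial scale `|x|`. -/
structure ScaleBound (k : ℤ) (K : ℝ) (f : Spacetime → F) (p : Spacetime) : Prop where
  norm_le : ‖f p‖ ≤ K * ‖p.1‖ ^ k
  norm_fderiv_le : ‖fderiv ℝ f p‖ ≤ K * ‖p.1‖ ^ (k - 1)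

namespace ScaleBound

lemma mono (hf : ScaleBound k K f p) (hKL : K ≤ L) : ScaleBound k L f p where
  norm_le := hf.norm_le.trans (by gcongr)
  norm_fderiv_le := hf.norm_fderiv_le.trans (by gcongr)

lemma of_eventuallyEq_zero (hf : f =ᶠ[𝓝 p] 0) : ScaleBound k 0 f p where
  norm_le := by simp [hf.eq_of_nhds]
  norm_fderiv_le := by simp [hf.fderiv_eq]

lemma add (hf : ScaleBound k K f p) (hg : ScaleBound k L g p) (hdf : DifferentiableAt ℝ f p)
    (hdg : DifferentiableAt ℝ g p) : ScaleBound k (K + L) (fun q => f q + g q) p where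
  norm_le := by
    rw [add_mul]; exact (norm_add_le _ _).trans (add_le_add hf.norm_le hg.norm_le)
  norm_fderiv_le := by
    rw [fderiv_fun_add hdf hdg, add_mul]
    exact (norm_add_le _ _).trans (add_le_add hf.norm_fderiv_le hg.norm_fderiv_le)

lemma sub (hf : ScaleBound k K f p) (hg : ScaleBound k L g p) (hdf : DifferentiableAt ℝ f p)
    (hdg : DifferentiableAt ℝ g p) : ScaleBound k (K + L) (fun q => f q - g q) p where
  norm_le := by
    rw [add_mul]; exact (norm_sub_le _ _).trans (add_le_add hf.norm_le hg.norm_le)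
  norm_fderiv_le := by
    rw [fderiv_fun_sub hdf hdg, add_mul]
    exact (norm_sub_le _ _).trans (add_le_add hf.norm_fderiv_le hg.norm_fderiv_le)

lemma smul {c : Spacetime → ℝ} (hc : ScaleBound k K c p) (hf : ScaleBound l L f p)
    (hdc : DifferentiableAt ℝ c p) (hdf : DifferentiableAt ℝ f p) (hp : p.1 ≠ 0) :
    ScaleBound (k + l) (2 * (K * L)) (fun q => c q • f q) p := by
  have hr : ‖p.1‖ ≠ 0 := norm_ne_zero_iff.2 hp
  have hmul {x y : ℝ} {i j : ℤ} (hx : x ≤ K * ‖p.1‖ ^ i) (hy : y ≤ L * ‖p.1‖ ^ j) (hx0 : 0 ≤ x)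
      (hy0 : 0 ≤ y) : x * y ≤ K * L * ‖p.1‖ ^ (i + j) :=
    calc x * y ≤ K * ‖p.1‖ ^ i * (L * ‖p.1‖ ^ j) := mul_le_mul hx hy hy0 (hx0.trans hx)
      _ = K * L * ‖p.1‖ ^ (i + j) := by rw [zpow_add₀ hr]; ring
  constructor
  · have h := hmul hc.norm_le hf.norm_le (norm_nonneg _) (norm_nonneg _)
    rw [norm_smul]
    linarith [(mul_nonneg (norm_nonneg _) (norm_nonneg _)).trans h]
  · have h₁ := hmul hc.norm_le hf.norm_fderiv_le (norm_nonneg _) (norm_nonneg _)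
    have h₂ := hmul hc.norm_fderiv_le hf.norm_le (norm_nonneg _) (norm_nonneg _)
    rw [← add_sub_assoc] at h₁
    rw [sub_add_eq_add_sub] at h₂
    rw [fderiv_fun_smul hdc hdf]
    refine (norm_add_le _ _).trans ?_
    rw [norm_smul, ContinuousLinearMap.norm_smulRight_apply]
    linarith

end ScaleBound

lemma exists_pow_mul_norm_comp_smul_le {E : Type*} [NormedAddCommGroup E] [NormedSpace ℝ E]
    {h : E → F} (hh : Continuous h) (hc : HasCompactSupport h) (j : ℕ) :
    ∃ B, ∀ ε : ℝ, 0 < ε → ∀ x, x ≠ 0 → ε⁻¹ ^ j * ‖h (ε⁻¹ • x)‖ ≤ B * ‖x‖ ^ (-j : ℤ) := by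
  obtain ⟨B, hB⟩ := (hc.smul_left (f := fun y => ‖y‖ ^ j)).exists_bound_of_continuous
    ((continuous_norm.pow j).smul hh)
  refine ⟨B, fun ε hε x hx => ?_⟩
  rw [zpow_neg, zpow_natCast, ← div_eq_mul_inv, le_div_iff₀ (pow_pos (norm_pos_iff.2 hx) j)]
  calc ε⁻¹ ^ j * ‖h (ε⁻¹ • x)‖ * ‖x‖ ^ j = ‖‖ε⁻¹ • x‖ ^ j • h (ε⁻¹ • x)‖ := by
        rw [norm_smul, norm_pow, norm_norm, norm_smul, norm_inv, Real.norm_of_nonneg hε.le]; ring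
    _ ≤ B := hB _

lemma exists_scaleBound_comp_smul {g : ℝ × ℝ → F} (hg : ContDiff ℝ 1 g) (hc : HasCompactSupport g)
    (j : ℕ) : ∃ B, ∀ ε : ℝ, 0 < ε → ∀ p : Spacetime, p.1 ≠ 0 →
      ScaleBound (-j) B (fun q => ε⁻¹ ^ j • g (ε⁻¹ • q.1)) p := by
  obtain ⟨B₀, hB₀⟩ := exists_pow_mul_norm_comp_smul_le hg.continuous hc j
  obtain ⟨B₁, hB₁⟩ := exists_pow_mul_norm_comp_smul_le (hg.continuous_fderiv one_ne_zero)
    (hc.fderiv ℝ) (j + 1)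
  refine ⟨max B₀ B₁, fun ε hε p hp => ⟨?_, ?_⟩⟩
  · calc ‖ε⁻¹ ^ j • g (ε⁻¹ • p.1)‖ = ε⁻¹ ^ j * ‖g (ε⁻¹ • p.1)‖ := by
          rw [norm_smul, norm_pow, norm_inv, Real.norm_of_nonneg hε.le]
      _ ≤ B₀ * ‖p.1‖ ^ (-j : ℤ) := hB₀ ε hε p.1 hp
      _ ≤ max B₀ B₁ * ‖p.1‖ ^ (-j : ℤ) := by gcongr; exact le_max_left _ _
  · have hd : DifferentiableAt ℝ (fun q : Spacetime => g (ε⁻¹ • q.1)) p :=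
      (hg.differentiable one_ne_zero _).comp p (by fun_prop)
    have hfst : ‖ContinuousLinearMap.fst ℝ (ℝ × ℝ) ℝ‖ ≤ 1 := ContinuousLinearMap.norm_fst_le ..
    have hcomp : ‖(fderiv ℝ g (ε⁻¹ • p.1)).comp (.fst ℝ (ℝ × ℝ) ℝ)‖ ≤ ‖fderiv ℝ g (ε⁻¹ • p.1)‖ :=
      (ContinuousLinearMap.opNorm_comp_le _ _).trans (mul_le_of_le_one_right (norm_nonneg _) hfst)
    calc ‖fderiv ℝ (fun q : Spacetime => ε⁻¹ ^ j • g (ε⁻¹ • q.1)) p‖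
        = ε⁻¹ ^ (j + 1) * ‖(fderiv ℝ g (ε⁻¹ • p.1)).comp (.fst ℝ (ℝ × ℝ) ℝ)‖ := by
          rw [fderiv_fun_const_smul hd, fderiv_comp_smul_fst (hg.differentiable one_ne_zero),
            smul_smul, ← pow_succ, norm_smul, norm_pow, norm_inv, Real.norm_of_nonneg hε.le]
      _ ≤ ε⁻¹ ^ (j + 1) * ‖fderiv ℝ g (ε⁻¹ • p.1)‖ := by gcongr
      _ ≤ B₁ * ‖p.1‖ ^ (-(j + 1 : ℕ) : ℤ) := hB₁ ε hε p.1 hp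
      _ ≤ max B₀ B₁ * ‖p.1‖ ^ (-j - 1 : ℤ) := by
          rw [Nat.cast_succ, neg_add, ← sub_eq_add_neg]; gcongr; exact le_max_right _ _

lemma exists_scaleBound_of_contDiff {f : Spacetime → F} (hf : ContDiff ℝ 1 f) (R : ℝ) :
    ∃ K, ∀ p ∈ Metric.closedBall (0 : Spacetime) R, p.1 ≠ 0 → ScaleBound 0 K f p := by
  obtain ⟨K₀, hK₀⟩ := (isCompact_closedBall (0 : Spacetime) R).exists_bound_of_continuousOn
    hf.continuous.continuousOn
  obtain ⟨K₁, hK₁⟩ := (isCompact_closedBall (0 : Spacetime) R).exists_bound_of_continuousOn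
    (hf.continuous_fderiv one_ne_zero).continuousOn
  refine ⟨max K₀ (K₁ * R), fun p hpR hp => ⟨?_, ?_⟩⟩
  · simpa using Or.inl (hK₀ p hpR)
  · have hx : 0 < ‖p.1‖ := norm_pos_iff.2 hp
    have hxR : ‖p.1‖ ≤ R := (norm_fst_le p).trans (mem_closedBall_zero_iff.1 hpR)
    have hK₁0 : 0 ≤ K₁ := (norm_nonneg _).trans (hK₁ p hpR)
    rw [zero_sub, zpow_neg_one, ← div_eq_mul_inv, le_div_iff₀ hx]
    exact (mul_le_mul (hK₁ p hpR) hxR hx.le hK₁0).trans (le_max_right _ _)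

lemma exists_scaleBound_streamFunction {w : Spacetime → ℝ × ℝ} (hw : ContDiff ℝ 1 w)
    (hc : HasCompactSupport w) (R : ℝ) :
    ∃ K, ∀ p ∈ Metric.closedBall (0 : Spacetime) R, ScaleBound 1 K (streamFunction w) p := by
  obtain ⟨M, hM⟩ := hc.exists_bound_of_continuous hw.continuous
  obtain ⟨K₁, hK₁⟩ := (isCompact_closedBall (0 : Spacetime) R).exists_bound_of_continuousOn
    ((contDiff_streamFunction hw).continuous_fderiv one_ne_zero).continuousOn
  refine ⟨max (2 * M) K₁, fun p hpR => ⟨?_, ?_⟩⟩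
  · rw [zpow_one]
    exact (abs_streamFunction_le fun y => hM (y, p.2)).trans (by gcongr; exact le_max_left _ _)
  · simpa using Or.inr (hK₁ p hpR)

end ScaleBound

lemma exists_scaleBound_solenoidalCutoff {w : Spacetime → ℝ × ℝ} (hw : ContDiff ℝ 1 w)
    (hc : HasCompactSupport w) {R : ℝ} (hR : 2 ≤ R) (hwR : ∀ q : Spacetime, R < ‖q‖ → w q = 0) :
    ∃ K, ∀ ε, 0 < ε → ε ≤ 1 → ∀ p : Spacetime, p.1 ≠ 0 →
      ScaleBound 0 K (solenoidalCutoff ε w) p := by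
  obtain ⟨W, hW⟩ := exists_scaleBound_of_contDiff hw R
  obtain ⟨Ψ, hΨ⟩ := exists_scaleBound_streamFunction hw hc R
  obtain ⟨A, hA⟩ := exists_scaleBound_comp_smul (contDiff_unitBump.of_le one_le_two)
    unitBump.hasCompactSupport 0
  obtain ⟨B, hB⟩ := exists_scaleBound_comp_smul (contDiff_perpGrad contDiff_unitBump)
    (hasCompactSupport_perpGrad unitBump.hasCompactSupport) 1
  refine ⟨max 0 (W + (2 * (A * W) + 2 * (Ψ * B))), fun ε hε hε1 p hp => ?_⟩
  by_cases hpR : p ∈ Metric.closedBall (0 : Spacetime) R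
  · have hA' := hA ε hε p hp
    have hB' := hB ε hε p hp
    simp only [pow_zero, one_smul, Nat.cast_zero, neg_zero] at hA'
    simp only [pow_one, Nat.cast_one] at hB'
    have hdw := hw.differentiable one_ne_zero p
    have hdη := (contDiff_unitBump_comp ε).differentiable one_ne_zero p
    have hdP := (contDiff_perpGrad_unitBump_comp ε).differentiable one_ne_zero p
    have hdψ := (contDiff_streamFunction hw).differentiable one_ne_zero p
    have hηw := hA'.smul (hW p hpR hp) hdη hdw hp
    have hψP := (hΨ p hpR).smul hB' hdψ hdP hp
    rw [add_zero] at hηw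
    rw [add_neg_cancel] at hψP
    exact ((hW p hpR hp).sub (hηw.add hψP (hdη.fun_smul hdw) (hdψ.fun_smul hdP)) hdw
      ((hdη.fun_smul hdw).fun_add (hdψ.fun_smul hdP))).mono (le_max_right _ _)
  · rw [mem_closedBall_zero_iff, not_le] at hpR
    have hzero : solenoidalCutoff ε w =ᶠ[𝓝 p] 0 :=
      (continuousAt_id.norm.eventually_const_lt hpR).mono fun q hq =>
        solenoidalCutoff_eq_zero_of_lt_norm hwR hε (by linarith) hq
    exact (ScaleBound.of_eventuallyEq_zero hzero).mono (le_max_left _ _)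

section DominatedConvergence

lemma integrable_and_tendsto_integral_of_dominated {α G : Type*} [MeasurableSpace α]
    [NormedAddCommGroup G] [NormedSpace ℝ G] {μ : Measure α} {F : ℕ → α → G} {f : α → G}
    {bound : α → ℝ} (hF : ∀ n, AEStronglyMeasurable (F n) μ) (hbound : Integrable bound μ)
    (hle : ∀ n, ∀ᵐ a ∂μ, ‖F n a‖ ≤ bound a)
    (hlim : ∀ᵐ a ∂μ, Tendsto (fun n => F n a) atTop (𝓝 (f a))) :
    Integrable f μ ∧ Tendsto (fun n => ∫ a, F n a ∂μ) atTop (𝓝 (∫ a, f a ∂μ)) :=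
  ⟨⟨aestronglyMeasurable_of_tendsto_ae atTop hF hlim,
    hasFiniteIntegral_of_dominated_convergence hbound.2 hle hlim⟩,
    tendsto_integral_of_dominated_convergence bound hF hbound hle hlim⟩

lemma integrableOn_closedBall_comp_fst {E F G : Type*} [NormedAddCommGroup E] [ProperSpace E]
    [MeasurableSpace E] [NormedAddCommGroup F] [ProperSpace F] [MeasurableSpace F]
    [NormedAddCommGroup G] {μ : Measure E} [SFinite μ] {ν : Measure F} [SFinite ν]
    [IsFiniteMeasureOnCompacts ν] {g : E → G} (hg : LocallyIntegrable g μ) (R : ℝ) :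
    IntegrableOn (fun p : E × F => g p.1) (Metric.closedBall 0 R) (μ.prod ν) := by
  have : IsFiniteMeasure (ν.restrict (Metric.closedBall 0 R)) :=
    ⟨by simpa using (isCompact_closedBall (0 : F) R).measure_lt_top⟩
  rw [← Prod.mk_zero_zero, ← closedBall_prod_same, IntegrableOn, ← Measure.prod_restrict]
  exact Integrable.comp_fst (hg.integrableOn_isCompact (isCompact_closedBall 0 R)) _

end DominatedConvergence

lemma ae_restrict_slab_mem_puncturedHalfSpace :
    ∀ᵐ p ∂volume.restrict {p : Spacetime | 0 < p.2}, p ∈ puncturedHalfSpace := by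
  filter_upwards [ae_restrict_mem (isOpen_setOf_lt_snd 0).measurableSet,
    ae_restrict_of_ae ae_fst_ne_zero] with p ht hx using ⟨hx, ht⟩

lemma aestronglyMeasurable_slab {F : Type*} [NormedAddCommGroup F] {f : Spacetime → F}
    (hf : ContinuousOn f puncturedHalfSpace) :
    AEStronglyMeasurable f (volume.restrict {p : Spacetime | 0 < p.2}) := by
  rw [← Measure.restrict_eq_self_of_ae_mem ae_restrict_slab_mem_puncturedHalfSpace,
    Measure.restrict_restrict isOpen_puncturedHalfSpace.measurableSet,
    inter_eq_left.2 (show puncturedHalfSpace ⊆ {p | 0 < p.2} from fun _ hp => hp.2)]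
  exact hf.aestronglyMeasurable isOpen_puncturedHalfSpace.measurableSet

section Majorants

variable {v w : Spacetime → ℝ × ℝ} {p : Spacetime} {K M : ℝ}

lemma abs_dot_le_of_scaleBound (hw : ScaleBound 0 K w p) (hv : ‖v p‖ ^ 2 ≤ M) :
    |dot (v p) (w p)| ≤ 2 * K * (M + 1) := by
  have hwK : ‖w p‖ ≤ K := by simpa using hw.norm_le
  have hvM : ‖v p‖ ≤ M + 1 := by nlinarith [sq_nonneg (‖v p‖ - 1)]
  calc |dot (v p) (w p)| ≤ 2 * (‖v p‖ * ‖w p‖) := abs_dot_le _ _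
    _ ≤ 2 * ((M + 1) * K) := by gcongr; exact (norm_nonneg _).trans hvM
    _ = 2 * K * (M + 1) := by ring

lemma abs_eulerForm_le_of_scaleBound (hd : DifferentiableAt ℝ w p) (hw : ScaleBound 0 K w p)
    (hv : ‖v p‖ ^ 2 ≤ ‖p.1‖ * M) (hp : p.1 ≠ 0) :
    |eulerForm v w p| ≤ 4 * K * M + 2 * K * ‖p.1‖⁻¹ := by
  have hdw : ‖fderiv ℝ w p‖ ≤ K * ‖p.1‖⁻¹ := by simpa using hw.norm_fderiv_le
  have hx : ‖p.1‖ ≠ 0 := norm_ne_zero_iff.2 hp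
  calc |eulerForm v w p| ≤ 2 * ‖fderiv ℝ w p‖ * (2 * ‖v p‖ ^ 2 + 1) := abs_eulerForm_le v hd
    _ ≤ 2 * (K * ‖p.1‖⁻¹) * (2 * (‖p.1‖ * M) + 1) := by
        gcongr; linarith [norm_nonneg (fderiv ℝ w p)]
    _ = 4 * K * M + 2 * K * ‖p.1‖⁻¹ := by field_simp; ring

lemma eulerForm_congr {w' : Spacetime → ℝ × ℝ} (v : Spacetime → ℝ × ℝ)
    (hw : DifferentiableAt ℝ w p) (h : w' =ᶠ[𝓝 p] w) : eulerForm v w' p = eulerForm v w p := by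
  rw [eulerForm_eq_dot_fderiv v hw, eulerForm_eq_dot_fderiv v (h.differentiableAt_iff.2 hw),
    h.fderiv_eq]

lemma continuousOn_eulerForm (hv : ContinuousOn v puncturedHalfSpace) (hw : ContDiff ℝ 1 w) :
    ContinuousOn (eulerForm v w) puncturedHalfSpace := by
  have hD : ContinuousOn (fun p => fderiv ℝ w p (v p, 1)) puncturedHalfSpace :=
    (hw.continuous_fderiv one_ne_zero).continuousOn.clm_apply (hv.prodMk continuousOn_const)
  exact (contDiff_dot.continuous.comp_continuousOn (hv.prodMk hD)).congr fun p _ =>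
    eulerForm_eq_dot_fderiv v (hw.differentiable one_ne_zero p)

lemma exists_majorant_solenoidalCutoff (hw : ContDiff ℝ 1 w) (hc : HasCompactSupport w) :
    ∃ R K, ∀ ε, 0 < ε → ε ≤ 1 →
      (∀ p : Spacetime, R < ‖p‖ → solenoidalCutoff ε w p = 0) ∧
        ∀ p : Spacetime, p.1 ≠ 0 → ScaleBound 0 K (solenoidalCutoff ε w) p := by
  obtain ⟨R, -, hR⟩ := hc.exists_pos_le_norm
  have hwR (q : Spacetime) (hq : max 2 R < ‖q‖) : w q = 0 := hR q ((le_max_right _ _).trans hq.le)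
  obtain ⟨K, hK⟩ := exists_scaleBound_solenoidalCutoff hw hc (le_max_left 2 R) hwR
  exact ⟨max 2 R, K, fun ε hε hε1 => ⟨fun p hp => solenoidalCutoff_eq_zero_of_lt_norm hwR hε
    (le_max_of_le_left (by linarith)) hp, hK ε hε hε1⟩⟩

lemma hasCompactSupport_solenoidalCutoff (hw : ContDiff ℝ 1 w) (hc : HasCompactSupport w) {ε : ℝ}
    (hε : 0 < ε) (hε1 : ε ≤ 1) : HasCompactSupport (solenoidalCutoff ε w) := by
  obtain ⟨R, K, hRK⟩ := exists_majorant_solenoidalCutoff hw hc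
  exact .intro (isCompact_closedBall 0 R) fun p hp =>
    (hRK ε hε hε1).1 p (not_le.1 fun h => hp (mem_closedBall_zero_iff.2 h))

end Majorants

section Limit

variable {v w : Spacetime → ℝ × ℝ} {m : ℝ × ℝ → ℝ} {ε : ℕ → ℝ}

lemma exists_integrable_forall_abs_eulerForm_le (hm : LocallyIntegrable m)
    (hvm : ∀ p ∈ puncturedHalfSpace, ‖v p‖ ^ 2 ≤ ‖p.1‖ * m p.1) (hw : ContDiff ℝ 1 w)
    (hc : HasCompactSupport w) :
    ∃ b : Spacetime → ℝ, Integrable b ∧ ∀ ε, 0 < ε → ε ≤ 1 → ∀ p ∈ puncturedHalfSpace,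
      |eulerForm v (solenoidalCutoff ε w) p| ≤ b p := by
  obtain ⟨R, K, hRK⟩ := exists_majorant_solenoidalCutoff hw hc
  have hinv : LocallyIntegrable fun x : ℝ × ℝ => ‖x‖⁻¹ :=
    locallyIntegrable_of_norm_le_rpow (C := 1) (α := 1) (by simp) (by simp)
      (.of_forall fun x => by simp [Real.rpow_neg_one]) (by fun_prop)
  have hb : LocallyIntegrable fun x => 4 * K * m x + 2 * K * ‖x‖⁻¹ :=
    (hm.smul (4 * K)).add (hinv.smul (2 * K))
  refine ⟨(Metric.closedBall 0 R).indicator fun p => 4 * K * m p.1 + 2 * K * ‖p.1‖⁻¹,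
    (integrableOn_closedBall_comp_fst hb R).integrable_indicator
      Metric.isClosed_closedBall.measurableSet, fun ε hε hε1 p hp => ?_⟩
  obtain ⟨hzero, hscale⟩ := hRK ε hε hε1
  have hd (q : Spacetime) := (contDiff_solenoidalCutoff hw ε).differentiable one_ne_zero q
  by_cases hpR : p ∈ Metric.closedBall 0 R
  · rw [indicator_of_mem hpR]
    exact abs_eulerForm_le_of_scaleBound (hd p) (hscale p hp.1) (hvm p hp) hp.1
  · rw [indicator_of_notMem hpR]
    rw [mem_closedBall_zero_iff, not_le] at hpR
    have hloc : solenoidalCutoff ε w =ᶠ[𝓝 p] 0 :=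
      (continuousAt_id.norm.eventually_const_lt hpR).mono hzero
    rw [eulerForm_eq_dot_fderiv v (hd p), hloc.fderiv_eq]
    simp [dot]

lemma exists_integrable_forall_abs_dot_le (hm : LocallyIntegrable m)
    (hvm : ∀ p ∈ puncturedHalfSpace, ‖v p‖ ^ 2 ≤ ‖p.1‖ * m p.1) (hw : ContDiff ℝ 1 w)
    (hc : HasCompactSupport w) :
    ∃ b : ℝ × ℝ → ℝ, Integrable b ∧ ∀ ε, 0 < ε → ε ≤ 1 → ∀ p ∈ puncturedHalfSpace,
      |dot (v p) (solenoidalCutoff ε w p)| ≤ b p.1 := by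
  obtain ⟨R, K, hRK⟩ := exists_majorant_solenoidalCutoff hw hc
  have hb : LocallyIntegrable fun x => 2 * K * (R * m x + 1) :=
    ((hm.smul R).add (locallyIntegrable_const 1)).smul (2 * K)
  refine ⟨(Metric.closedBall 0 R).indicator fun x => 2 * K * (R * m x + 1),
    (hb.integrableOn_isCompact (isCompact_closedBall 0 R)).integrable_indicator
      Metric.isClosed_closedBall.measurableSet, fun ε hε hε1 p hp => ?_⟩
  obtain ⟨hzero, hscale⟩ := hRK ε hε hε1
  by_cases hpR : p.1 ∈ Metric.closedBall 0 R
  · rw [indicator_of_mem hpR]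
    have hm0 : 0 ≤ m p.1 :=
      nonneg_of_mul_nonneg_right ((sq_nonneg _).trans (hvm p hp)) (norm_pos_iff.2 hp.1)
    refine abs_dot_le_of_scaleBound (hscale p hp.1) ((hvm p hp).trans ?_)
    exact mul_le_mul_of_nonneg_right (mem_closedBall_zero_iff.1 hpR) hm0
  · rw [mem_closedBall_zero_iff, not_le] at hpR
    simp [hzero p (hpR.trans_le (norm_fst_le p)), dot, hpR]

lemma eventually_solenoidalCutoff_eventuallyEq (w : Spacetime → ℝ × ℝ) (hε : ∀ n, 0 < ε n)
    (hε0 : Tendsto ε atTop (𝓝 0)) {x : ℝ × ℝ} (hx : x ≠ 0) :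
    ∀ᶠ n in atTop, ∀ t, solenoidalCutoff (ε n) w =ᶠ[𝓝 (x, t)] w := by
  have hsmall : Tendsto (fun n => 2 * ε n) atTop (𝓝 0) := by simpa using hε0.const_mul 2
  filter_upwards [hsmall.eventually_lt_const (norm_pos_iff.2 hx)] with n hn t
  have hfst : ContinuousAt (fun q : Spacetime => ‖q.1‖) (x, t) := continuousAt_fst.norm
  exact (hfst.eventually_const_lt hn).mono fun q hq => solenoidalCutoff_of_lt_norm (hε n) hq

lemma tendsto_setIntegral_eulerForm_solenoidalCutoff (hv : ContinuousOn v puncturedHalfSpace)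
    (hm : LocallyIntegrable m) (hvm : ∀ p ∈ puncturedHalfSpace, ‖v p‖ ^ 2 ≤ ‖p.1‖ * m p.1)
    (hw : ContDiff ℝ 1 w) (hc : HasCompactSupport w) (hε : ∀ n, 0 < ε n) (hε1 : ∀ n, ε n ≤ 1)
    (hε0 : Tendsto ε atTop (𝓝 0)) :
    IntegrableOn (eulerForm v w) {p : Spacetime | 0 < p.2} ∧
      Tendsto (fun n => ∫ p in {p : Spacetime | ε n < p.2},
        eulerForm v (solenoidalCutoff (ε n) w) p) atTop
        (𝓝 (∫ p in {p : Spacetime | 0 < p.2}, eulerForm v w p)) := by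
  obtain ⟨b, hb, hle⟩ := exists_integrable_forall_abs_eulerForm_le hm hvm hw hc
  have hslab (n : ℕ) : MeasurableSet {p : Spacetime | ε n < p.2} :=
    (isOpen_setOf_lt_snd (ε n)).measurableSet
  have hsub (n : ℕ) : {p : Spacetime | ε n < p.2} ⊆ {p | 0 < p.2} := fun _ hp => (hε n).trans hp
  have hind (n : ℕ) (f : Spacetime → ℝ) : ∫ p in {p : Spacetime | ε n < p.2}, f p =
      ∫ p in {p : Spacetime | 0 < p.2}, {p : Spacetime | ε n < p.2}.indicator f p := by
    rw [setIntegral_indicator (hslab n), inter_eq_right.2 (hsub n)]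
  simp only [hind]
  refine integrable_and_tendsto_integral_of_dominated (fun n => ?_) hb.restrict (fun n => ?_) ?_
  · exact (aestronglyMeasurable_slab (continuousOn_eulerForm hv
      (contDiff_solenoidalCutoff hw (ε n)))).indicator (hslab n)
  · filter_upwards [ae_restrict_slab_mem_puncturedHalfSpace] with p hp
    exact (norm_indicator_le_norm_self _ p).trans (hle (ε n) (hε n) (hε1 n) p hp)
  · filter_upwards [ae_restrict_slab_mem_puncturedHalfSpace] with p hp
    refine tendsto_const_nhds.congr' ?_
    filter_upwards [eventually_solenoidalCutoff_eventuallyEq w hε hε0 hp.1,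
      hε0.eventually_lt_const hp.2] with n hcut (hn : p ∈ {p | ε n < p.2})
    rw [indicator_of_mem hn, eulerForm_congr v (hw.differentiable one_ne_zero p) (hcut p.2)]

lemma tendsto_integral_dot_solenoidalCutoff (hv : ContinuousOn v puncturedHalfSpace)
    (hm : LocallyIntegrable m) (hvm : ∀ p ∈ puncturedHalfSpace, ‖v p‖ ^ 2 ≤ ‖p.1‖ * m p.1)
    {v₀ : ℝ × ℝ → ℝ × ℝ} (hv₀ : ∀ᵐ x, Tendsto (fun t => v (x, t)) (𝓝[>] 0) (𝓝 (v₀ x)))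
    (hw : ContDiff ℝ 1 w) (hc : HasCompactSupport w) (hε : ∀ n, 0 < ε n) (hε1 : ∀ n, ε n ≤ 1)
    (hε0 : Tendsto ε atTop (𝓝 0)) :
    Integrable (fun x => dot (v₀ x) (w (x, 0))) ∧
      Tendsto (fun n => ∫ x, dot (v (x, ε n)) (solenoidalCutoff (ε n) w (x, ε n))) atTop
        (𝓝 (∫ x, dot (v₀ x) (w (x, 0)))) := by
  obtain ⟨b, hb, hle⟩ := exists_integrable_forall_abs_dot_le hm hvm hw hc
  have hne : ∀ᵐ x : ℝ × ℝ, x ≠ 0 := Measure.ae_ne volume 0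
  refine integrable_and_tendsto_integral_of_dominated (fun n => ?_) hb (fun n => ?_) ?_
  · have hcont : ContinuousOn (fun x => dot (v (x, ε n)) (solenoidalCutoff (ε n) w (x, ε n)))
        {x | x ≠ 0} :=
      contDiff_dot.continuous.comp_continuousOn <|
        (hv.comp (by fun_prop) fun x hx => ⟨hx, hε n⟩).prodMk
          ((contDiff_solenoidalCutoff hw (ε n)).continuous.comp (by fun_prop)).continuousOn
    rw [← Measure.restrict_eq_self_of_ae_mem hne]
    exact hcont.aestronglyMeasurable isOpen_ne.measurableSet
  · filter_upwards [hne] with x hx using hle (ε n) (hε n) (hε1 n) (x, ε n) ⟨hx, hε n⟩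
  · filter_upwards [hne, hv₀] with x hx hvx
    have hε0' : Tendsto ε atTop (𝓝[>] 0) := tendsto_nhdsWithin_iff.2 ⟨hε0, .of_forall hε⟩
    have hwx : Tendsto (fun n => solenoidalCutoff (ε n) w (x, ε n)) atTop (𝓝 (w (x, 0))) := by
      refine (((hw.continuous.comp (.prodMk_right x)).tendsto 0).comp hε0).congr' ?_
      filter_upwards [eventually_solenoidalCutoff_eventuallyEq w hε hε0 hx] with n hcut
      exact (hcut (ε n)).eq_of_nhds.symm
    exact (contDiff_dot.continuous.tendsto _).comp ((hvx.comp hε0').prodMk_nhds hwx)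

end Limit

section PowerGrowth

lemma norm_le_sqrt_sq_add_sq (x : ℝ × ℝ) : ‖x‖ ≤ √(x.1 ^ 2 + x.2 ^ 2) :=
  max_le (Real.abs_le_sqrt (by nlinarith [sq_nonneg x.2]))
    (Real.abs_le_sqrt (by nlinarith [sq_nonneg x.1]))

lemma sqrt_sq_add_sq_le (x : ℝ × ℝ) : √(x.1 ^ 2 + x.2 ^ 2) ≤ 2 * ‖x‖ := by
  have h₁ : x.1 ^ 2 ≤ ‖x‖ ^ 2 := sq_le_sq.2 ((norm_fst_le x).trans (le_abs_self _))
  have h₂ : x.2 ^ 2 ≤ ‖x‖ ^ 2 := sq_le_sq.2 ((norm_snd_le x).trans (le_abs_self _))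
  exact Real.sqrt_le_iff.2 ⟨by positivity, by nlinarith [sq_nonneg ‖x‖]⟩

lemma rpow_le_rpow_add_rpow_of_mem_Icc {a b r : ℝ} (ha : 0 < a) (hr : r ∈ Icc a b) (β : ℝ) :
    r ^ β ≤ a ^ β + b ^ β := by
  have hr0 := ha.trans_le hr.1
  have hb0 := hr0.trans_le hr.2
  rcases le_total 0 β with hβ | hβ
  · linarith [Real.rpow_le_rpow hr0.le hr.2 hβ, Real.rpow_nonneg ha.le β]
  · linarith [Real.rpow_le_rpow_of_nonpos ha hr.1 hβ, Real.rpow_nonneg hb0.le β]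

lemma locallyIntegrable_sq_rpow_div_norm (C : ℝ) {α : ℝ} (hα : -1 / 2 < α) :
    LocallyIntegrable fun x : ℝ × ℝ => (C * √(x.1 ^ 2 + x.2 ^ 2) ^ α) ^ 2 / ‖x‖ := by
  refine locallyIntegrable_of_norm_le_rpow (C := C ^ 2 * (1 + 2 ^ (α * 2))) (α := 1 - α * 2)
    (by simp) (by norm_num; linarith) ?_ (Measurable.aestronglyMeasurable (by fun_prop))
  filter_upwards [Measure.ae_ne volume 0] with x hx
  have hx : 0 < ‖x‖ := norm_pos_iff.2 hx
  rw [Real.norm_of_nonneg (by positivity), div_le_iff₀ hx]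
  calc (C * √(x.1 ^ 2 + x.2 ^ 2) ^ α) ^ 2 = C ^ 2 * √(x.1 ^ 2 + x.2 ^ 2) ^ (α * 2) := by
        rw [mul_pow, Real.rpow_mul (Real.sqrt_nonneg _), Real.rpow_two]
    _ ≤ C ^ 2 * (‖x‖ ^ (α * 2) + (2 * ‖x‖) ^ (α * 2)) := by
        gcongr
        exact rpow_le_rpow_add_rpow_of_mem_Icc hx
          ⟨norm_le_sqrt_sq_add_sq x, sqrt_sq_add_sq_le x⟩ _
    _ = C ^ 2 * (1 + 2 ^ (α * 2)) * ‖x‖ ^ (-(1 - α * 2)) * ‖x‖ := by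
        rw [mul_assoc _ (‖x‖ ^ _), ← Real.rpow_add_one hx.ne', Real.mul_rpow zero_le_two hx.le]
        ring_nf

lemma exists_locallyIntegrable_sq_norm_le {v : Spacetime → ℝ × ℝ} {C α : ℝ} (hα : -1 / 2 < α)
    (hgrow : ∀ x, x ≠ 0 → ∀ t : ℝ, 0 < t →
      √((v (x, t)).1 ^ 2 + (v (x, t)).2 ^ 2) ≤ C * √(x.1 ^ 2 + x.2 ^ 2) ^ α) :
    ∃ m, LocallyIntegrable m ∧ ∀ p ∈ puncturedHalfSpace, ‖v p‖ ^ 2 ≤ ‖p.1‖ * m p.1 := by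
  refine ⟨_, locallyIntegrable_sq_rpow_div_norm C hα, fun p hp => ?_⟩
  rw [mul_div_cancel₀ _ (norm_ne_zero_iff.2 hp.1)]
  gcongr
  exact (norm_le_sqrt_sq_add_sq _).trans (hgrow p.1 hp.1 p.2 hp.2)

end PowerGrowth

theorem removable_singularity_weak_solution_general {v : Spacetime → ℝ × ℝ} {π : Spacetime → ℝ}
    (h : IsPuncturedEulerSolution v π) {m : ℝ × ℝ → ℝ} (hm : LocallyIntegrable m)
    (hvm : ∀ p ∈ puncturedHalfSpace, ‖v p‖ ^ 2 ≤ ‖p.1‖ * m p.1) {v₀ : ℝ × ℝ → ℝ × ℝ}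
    (hv₀ : ∀ᵐ x, Tendsto (fun t => v (x, t)) (𝓝[>] 0) (𝓝 (v₀ x))) {w : Spacetime → ℝ × ℝ}
    (hw : ContDiff ℝ 1 w) (hc : HasCompactSupport w)
    (hdiv : ∀ p : Spacetime, 0 < p.2 → divx w p = 0) :
    Integrable (fun x => dot (v₀ x) (w (x, 0))) ∧
      IntegrableOn (eulerForm v w) {p : Spacetime | 0 < p.2} ∧
      (∫ x, dot (v₀ x) (w (x, 0))) + ∫ p in {p : Spacetime | 0 < p.2}, eulerForm v w p = 0 := by
  set ε : ℕ → ℝ := fun n => 1 / (n + 1)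
  have hε (n : ℕ) : 0 < ε n := Nat.one_div_pos_of_nat
  have hε1 (n : ℕ) : ε n ≤ 1 := div_le_one_of_le₀ (by simp) (by positivity)
  have hε0 : Tendsto ε atTop (𝓝 0) := tendsto_one_div_add_atTop_nhds_zero_nat
  have hv := h.contDiffOn_velocity.continuousOn
  obtain ⟨hint₀, hlim₀⟩ := tendsto_integral_dot_solenoidalCutoff hv hm hvm hv₀ hw hc hε hε1 hε0
  obtain ⟨hint, hlim⟩ := tendsto_setIntegral_eulerForm_solenoidalCutoff hv hm hvm hw hc hε hε1 hε0
  have hslab (n : ℕ) : ∫ p in {p : Spacetime | ε n < p.2},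
      eulerForm v (solenoidalCutoff (ε n) w) p =
        -∫ x, dot (v (x, ε n)) (solenoidalCutoff (ε n) w (x, ε n)) :=
    h.setIntegral_slab_eulerForm (contDiff_solenoidalCutoff hw (ε n))
      (hasCompactSupport_solenoidalCutoff hw hc (hε n) (hε1 n))
      (fun p hp => divx_solenoidalCutoff hw (fun y => hdiv (y, p.2) hp) (ε n)) (hε n)
      (fun p hp => solenoidalCutoff_of_norm_lt (hε n) hp) (hε n)
  have heq := tendsto_nhds_unique (hlim.congr hslab) hlim₀.neg
  exact ⟨hint₀, hint, by rw [heq, add_neg_cancel]⟩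

/-- removable-singularity result.  A classical solution `(v, π)` of
incompressible Euler on `(ℝ²∖{0})×(0,∞)` with `|v(x,t)| ≤ C₀·|x|^{1−1/μ}` for `μ > 2/3`,
converging locally uniformly on `ℝ²∖{0}` to `v₀` as `t → 0⁺`, is a weak solution on all of
`ℝ²×[0,∞)` with initial data `v₀`: for every divergence-free test field
`w ∈ C_c^∞(ℝ²×[0,∞);ℝ²)`,
`∫ v₀·w(·,0) dx + ∫₀^∞∫ v·∂_t w + (v⊗v):∇_x w dx dt = 0`,
all integrals being absolutely convergent. -/
theorem removable_singularity_weak_solution (μ C₀ : ℝ) (hμ : 2 / 3 < μ)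
    (v : (ℝ × ℝ) × ℝ → ℝ × ℝ) (π : (ℝ × ℝ) × ℝ → ℝ)
    (hv : ContDiffOn ℝ 1 v {p : (ℝ × ℝ) × ℝ | p.1 ≠ 0 ∧ 0 < p.2})
    (hπ : ContDiffOn ℝ 1 π {p : (ℝ × ℝ) × ℝ | p.1 ≠ 0 ∧ 0 < p.2})
    (hdiv : ∀ (x : ℝ × ℝ), x ≠ 0 → ∀ t : ℝ, 0 < t → divx v (x, t) = 0)
    (hmom₁ : ∀ (x : ℝ × ℝ), x ≠ 0 → ∀ t : ℝ, 0 < t →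
      deriv (fun s => (v (x, s)).1) t
          + (v (x, t)).1 * fderiv ℝ (fun y => (v (y, t)).1) x (1, 0)
          + (v (x, t)).2 * fderiv ℝ (fun y => (v (y, t)).1) x (0, 1)
          + fderiv ℝ (fun y => π (y, t)) x (1, 0) = 0)
    (hmom₂ : ∀ (x : ℝ × ℝ), x ≠ 0 → ∀ t : ℝ, 0 < t →
      deriv (fun s => (v (x, s)).2) t
          + (v (x, t)).1 * fderiv ℝ (fun y => (v (y, t)).2) x (1, 0)
          + (v (x, t)).2 * fderiv ℝ (fun y => (v (y, t)).2) x (0, 1)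
          + fderiv ℝ (fun y => π (y, t)) x (0, 1) = 0)
    (hgrow : ∀ (x : ℝ × ℝ), x ≠ 0 → ∀ t : ℝ, 0 < t →
      Real.sqrt ((v (x, t)).1 ^ 2 + (v (x, t)).2 ^ 2)
        ≤ C₀ * Real.sqrt (x.1 ^ 2 + x.2 ^ 2) ^ (1 - 1 / μ))
    (v₀ : ℝ × ℝ → ℝ × ℝ)
    (hconv : ∀ K : Set (ℝ × ℝ), IsCompact K → K ⊆ {x : ℝ × ℝ | x ≠ 0} →
      TendstoUniformlyOn (fun (t : ℝ) (x : ℝ × ℝ) => v (x, t)) v₀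
        (nhdsWithin 0 (Set.Ioi 0)) K) :
    ∀ w : (ℝ × ℝ) × ℝ → ℝ × ℝ, ContDiff ℝ (⊤ : ℕ∞) w → HasCompactSupport w →
      (∀ p : (ℝ × ℝ) × ℝ, divx w p = 0) →
      Integrable (fun x : ℝ × ℝ =>
          (v₀ x).1 * (w (x, 0)).1 + (v₀ x).2 * (w (x, 0)).2) ∧
      IntegrableOn (eulerForm v w) {p : (ℝ × ℝ) × ℝ | 0 < p.2} ∧
      (∫ x : ℝ × ℝ, ((v₀ x).1 * (w (x, 0)).1 + (v₀ x).2 * (w (x, 0)).2))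
          + ∫ p in {p : (ℝ × ℝ) × ℝ | 0 < p.2}, eulerForm v w p = 0 := by
  intro w hw hc hdivw
  have hα : -1 / 2 < 1 - 1 / μ := by
    linarith [(one_div_lt (by linarith) (by norm_num)).2 (show 1 / (3 / 2) < μ by linarith)]
  obtain ⟨m, hm, hvm⟩ := exists_locallyIntegrable_sq_norm_le hα hgrow
  have hv₀ : ∀ᵐ x, Tendsto (fun t => v (x, t)) (𝓝[>] 0) (𝓝 (v₀ x)) :=
    (Measure.ae_ne volume 0).mono fun x hx =>
      (hconv {x} isCompact_singleton (singleton_subset_iff.2 hx)).tendsto_at rfl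
  exact removable_singularity_weak_solution_general (.of_coordinates hv hπ hdiv hmom₁ hmom₂) hm
    hvm hv₀ (hw.of_le (by exact_mod_cast le_top)) hc fun p _ => hdivw p
end
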